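/- arXiv:2506.14478 — 3 statements merged into one kernel-verified Lean document; each statement's English description precedes it below -/
import Mathlib

section
/- Let 0 < δ < 1 and C ≥ 1, and let ν be a Borel probability measure supported on the closed unit ball of ℝⁿ whose δ-dimensional energy E_δ(ν) = ∬ ∥Z − Z'∥^{−δ} dν(Z) dν(Z') satisfies E_δ(ν) ≤ C. Then there is a constant C₀ depending only on L, q and n such that for every ℓ ∈ ℕ and every R > 0, the Lebesgue measure of {s ∈ Cyl_ℓ : E_δ(f_sν) > R} is at most C'/R with C' = C₀·2^{2ℓ}·C/(1−δ), where f_sν denotes the pushforward of ν under f_s and Cyl_ℓ = {s ∈ ℝ^{n−2} : 2^{−ℓ} ≤ ∥s∥ ≤ 2^{−ℓ+1}}. In particular, E_δ(f_sν) < ∞ for Lebesgue-almost every s ∈ ℝ^{n−2}. -/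
/-!
By linearity of `f_s` in its second argument and Tonelli, integrating `s ↦ E_δ(f_s ν)` over a shell
`r ≤ ‖s‖ ≤ T` amounts to integrating, against `ν × ν`, the function
`Z - Z' ↦ ∫ ‖f_s (Z - Z')‖^{-δ} ds`. So everything reduces to the pointwise estimate
`∫_{shell} ‖f_s W‖^{-δ} ds ≤ A r^{-2} K(T) (1 - δ)^{-1} ‖W‖^{-δ}` (`exists_lintegral_fMap_le`),
after which the distributional bound is Markov's inequality with `r = 2^{-ℓ}`, `T = 2`, and almost
everywhere finiteness follows by exhausting the complement of the origin by shells.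

For the pointwise estimate, one of the three components of `W = (r₁, c, r₂)` has size at least
`‖W‖ / 2`. If it is `r₁` or `r₂`, then `‖f_s W‖ ≳ r² ‖W‖` on the whole shell, because
`q s ≥ κ ‖s‖²`. If it is `c`, then `c · L s = (Lᵀ c) · s` with `‖Lᵀ c‖ ≳ ‖c‖`, and a rotation taking
`Lᵀ c` to a coordinate direction reduces the integral to `∫_{-T}^{T} |t|^{-δ} dt ≤ 2T / (1 - δ)`
(`lintegral_ball_inner_rpow_neg`).
-/


open MeasureTheory Metric
open scoped ENNReal

/-- The space `ℝⁿ = {(r₁, c, r₂) : r₁, r₂ ∈ ℝ, c ∈ ℝ^{n−2}}`. -/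
abbrev PaperSpace (n : ℕ) : Type := ℝ × EuclideanSpace ℝ (Fin (n - 2)) × ℝ

/-- The Euclidean norm on `ℝⁿ = ℝ × ℝ^{n−2} × ℝ`. -/
noncomputable def euclNorm {n : ℕ} (Z : PaperSpace n) : ℝ :=
  Real.sqrt (Z.1 ^ 2 + ‖Z.2.1‖ ^ 2 + Z.2.2 ^ 2)

/-- The map `f_s(r₁,c,r₂) = (r₁, c·L(s), r₂·q(s)) ∈ ℝ³` (Euclidean `ℝ³`). -/
noncomputable def fMap {n : ℕ}
    (L : EuclideanSpace ℝ (Fin (n - 2)) →ₗ[ℝ] EuclideanSpace ℝ (Fin (n - 2)))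
    (q : QuadraticForm ℝ (EuclideanSpace ℝ (Fin (n - 2))))
    (s : EuclideanSpace ℝ (Fin (n - 2))) (Z : PaperSpace n) : EuclideanSpace ℝ (Fin 3) :=
  (WithLp.equiv 2 (Fin 3 → ℝ)).symm ![Z.1, ∑ i, Z.2.1 i * (L s) i, Z.2.2 * q s]

/-- The cylinder `Cyl_ℓ = {s ∈ ℝ^{n−2} : 2^{−ℓ} ≤ ∥s∥ ≤ 2^{−ℓ+1}}`. -/
def Cyl (n : ℕ) (ℓ : ℕ) : Set (EuclideanSpace ℝ (Fin (n - 2))) :=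
  {s | (2 : ℝ) ^ (-(ℓ : ℤ)) ≤ ‖s‖ ∧ ‖s‖ ≤ (2 : ℝ) ^ (-(ℓ : ℤ) + 1)}

/-- The `δ`-dimensional energy `E_δ(ν) = ∬ ∥Z − Z'∥^{−δ} dν(Z) dν(Z')` of a measure `ν`
on `ℝⁿ` (with values in `ℝ≥0∞`; note `0^{−δ} = ∞` for `δ > 0`). -/
noncomputable def energy {n : ℕ} (δ : ℝ) (ν : Measure (PaperSpace n)) : ℝ≥0∞ :=
  ∫⁻ Z, ∫⁻ Z', (ENNReal.ofReal (euclNorm (Z - Z'))) ^ (-δ) ∂ν ∂ν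

/-- The `δ`-dimensional energy of a measure on Euclidean `ℝ³`. -/
noncomputable def energy3 (δ : ℝ) (ρ : Measure (EuclideanSpace ℝ (Fin 3))) : ℝ≥0∞ :=
  ∫⁻ Y, ∫⁻ Y', (ENNReal.ofReal ‖Y - Y'‖) ^ (-δ) ∂ρ ∂ρ

/-! ### Powers with negative exponents and the singular integral over a ball -/

lemma ennreal_rpow_neg_anti {x y : ℝ≥0∞} (h : x ≤ y) {δ : ℝ} (hδ : 0 ≤ δ) :
    y ^ (-δ) ≤ x ^ (-δ) := by
  rw [ENNReal.rpow_neg, ENNReal.rpow_neg]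
  exact ENNReal.inv_le_inv.mpr (ENNReal.rpow_le_rpow h hδ)

lemma ennreal_rpow_neg_le_inv {x : ℝ≥0∞} (h : x ≤ 1) {δ : ℝ} (hδ : δ ≤ 1) :
    x ^ (-δ) ≤ x⁻¹ := by
  rw [← ENNReal.rpow_neg_one]
  exact ENNReal.rpow_le_rpow_of_exponent_ge h (by linarith)

lemma measurable_ofReal_abs_rpow (δ : ℝ) :
    Measurable fun t : ℝ => ENNReal.ofReal |t| ^ (-δ) := by
  fun_prop

lemma lintegral_Icc_zero_rpow_neg {δ T : ℝ} (hδ0 : 0 < δ) (hδ : δ < 1) (hT : 1 ≤ T) :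
    ∫⁻ t in Set.Icc 0 T, ENNReal.ofReal |t| ^ (-δ) ≤ ENNReal.ofReal (T / (1 - δ)) := by
  have hT0 : 0 ≤ T := by linarith
  have h1 : ∫⁻ t in Set.Icc 0 T, ENNReal.ofReal |t| ^ (-δ)
      = ∫⁻ t in Set.Ioc 0 T, ENNReal.ofReal (t ^ (-δ)) := by
    rw [setLIntegral_congr Ioc_ae_eq_Icc.symm]
    refine setLIntegral_congr_fun measurableSet_Ioc fun t ht => ?_
    simp only [abs_of_pos ht.1]
    rw [ENNReal.ofReal_rpow_of_pos ht.1]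
  have hint : IntegrableOn (fun t : ℝ => t ^ (-δ)) (Set.Ioc 0 T) volume :=
    (intervalIntegrable_iff_integrableOn_Ioc_of_le hT0).mp
      (intervalIntegral.intervalIntegrable_rpow' (by linarith))
  rw [h1, ← ofReal_integral_eq_lintegral_ofReal hint
    ((ae_restrict_iff' measurableSet_Ioc).mpr
      (Filter.Eventually.of_forall fun t ht => Real.rpow_nonneg ht.1.le _)),
    ← intervalIntegral.integral_of_le hT0, integral_rpow (Or.inl (by linarith)),
    Real.zero_rpow (by linarith), sub_zero, show -δ + 1 = 1 - δ by ring]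
  refine ENNReal.ofReal_le_ofReal (div_le_div_of_nonneg_right ?_ (by linarith))
  calc T ^ (1 - δ) ≤ T ^ (1 : ℝ) := Real.rpow_le_rpow_of_exponent_le hT (by linarith)
    _ = T := Real.rpow_one T

lemma lintegral_Icc_rpow_neg {δ T : ℝ} (hδ0 : 0 < δ) (hδ : δ < 1) (hT : 1 ≤ T) :
    ∫⁻ t in Set.Icc (-T) T, ENNReal.ofReal |t| ^ (-δ) ≤ ENNReal.ofReal (2 * T / (1 - δ)) := by
  have hneg : ∫⁻ t in Set.Icc (-T) 0, ENNReal.ofReal |t| ^ (-δ)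
      = ∫⁻ t in Set.Icc 0 T, ENNReal.ofReal |t| ^ (-δ) := by
    have := (Measure.measurePreserving_neg (volume : Measure ℝ)).setLIntegral_comp_preimage
      (s := Set.Icc 0 T) measurableSet_Icc (measurable_ofReal_abs_rpow δ)
    simpa using this
  have hsub : Set.Icc (-T) T ⊆ Set.Icc (-T) 0 ∪ Set.Icc 0 T := fun t ht =>
    (le_total t 0).imp (fun h => ⟨ht.1, h⟩) (fun h => ⟨h, ht.2⟩)
  have h1 := lintegral_Icc_zero_rpow_neg hδ0 hδ hT
  have hpos : 0 ≤ T / (1 - δ) := div_nonneg (by linarith) (by linarith)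
  calc ∫⁻ t in Set.Icc (-T) T, ENNReal.ofReal |t| ^ (-δ)
      ≤ ∫⁻ t in Set.Icc (-T) 0 ∪ Set.Icc 0 T, ENNReal.ofReal |t| ^ (-δ) :=
        lintegral_mono_set hsub
    _ ≤ _ := lintegral_union_le _ _ _
    _ ≤ ENNReal.ofReal (T / (1 - δ)) + ENNReal.ofReal (T / (1 - δ)) := by
        rw [hneg]; gcongr
    _ = ENNReal.ofReal (2 * T / (1 - δ)) := by
        rw [← ENNReal.ofReal_add hpos hpos]; congr 1; ring

/-- After rotating `u` to a coordinate vector, the ball sits inside the cube `[-T, T]^m`, on which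
the integrand depends on a single coordinate. -/
lemma lintegral_ball_inner_rpow_neg {m : ℕ} (hm : 0 < m) {δ T : ℝ} (hδ0 : 0 < δ) (hδ : δ < 1)
    (hT : 1 ≤ T) (u : EuclideanSpace ℝ (Fin m)) (hu : ‖u‖ = 1) :
    ∫⁻ s in closedBall 0 T, ENNReal.ofReal |inner ℝ u s| ^ (-δ)
      ≤ ENNReal.ofReal ((2 * T) ^ m / (1 - δ)) := by
  have hT0 : 0 ≤ T := by linarith
  let i₀ : Fin m := ⟨0, hm⟩
  obtain ⟨b, hb⟩ := Orthonormal.exists_orthonormalBasis_extension_of_card_eq (𝕜 := ℝ)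
    (E := EuclideanSpace ℝ (Fin m)) (ι := Fin m) (by simp) (v := fun _ => u) (s := {i₀})
    ⟨fun _ => hu, fun i j hij => absurd (Subsingleton.elim i j) hij⟩
  have hbu : b i₀ = u := hb i₀ rfl
  have hmp : MeasurePreserving
      (fun s : EuclideanSpace ℝ (Fin m) => (WithLp.ofLp (b.repr s) : Fin m → ℝ)) :=
    (PiLp.volume_preserving_ofLp (Fin m)).comp b.measurePreserving_repr
  have hcoord : ∀ s, (WithLp.ofLp (b.repr s) : Fin m → ℝ) i₀ = inner ℝ u s := by
    intro s; rw [← hbu]; exact b.repr_apply_apply s i₀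
  have hsub : closedBall 0 T ⊆
      (fun s : EuclideanSpace ℝ (Fin m) => (WithLp.ofLp (b.repr s) : Fin m → ℝ)) ⁻¹'
        Set.univ.pi fun _ => Set.Icc (-T) T := by
    intro s hs i _
    have h1 : ‖(b.repr s) i‖ ≤ ‖b.repr s‖ := PiLp.norm_apply_le _ _
    rw [b.repr.norm_map] at h1
    have h2 : ‖s‖ ≤ T := by simpa using hs
    exact abs_le.mp (h1.trans h2)
  have hg := measurable_ofReal_abs_rpow δ
  calc ∫⁻ s in closedBall 0 T, ENNReal.ofReal |inner ℝ u s| ^ (-δ)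
      ≤ _ := lintegral_mono_set hsub
    _ = ∫⁻ x in Set.univ.pi fun _ : Fin m => Set.Icc (-T) T, ENNReal.ofReal |x i₀| ^ (-δ) := by
        have h := hmp.setLIntegral_comp_preimage
          (MeasurableSet.univ_pi fun _ => measurableSet_Icc (a := -T) (b := T))
          (hg.comp (measurable_pi_apply i₀))
        simpa only [Function.comp_apply, hcoord] using h
    _ = ∫⁻ t, ENNReal.ofReal |t| ^ (-δ) ∂((Measure.pi fun _ : Fin m =>
          (volume : Measure ℝ).restrict (Set.Icc (-T) T)).map (Function.eval i₀)) := by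
        rw [lintegral_map hg (measurable_pi_apply i₀), volume_pi, Measure.restrict_pi_pi]
    _ = ENNReal.ofReal (2 * T) ^ (m - 1) *
          ∫⁻ t in Set.Icc (-T) T, ENNReal.ofReal |t| ^ (-δ) := by
        rw [Measure.pi_map_eval, lintegral_smul_measure]
        simp [Finset.card_erase_of_mem, ← two_mul]
    _ ≤ ENNReal.ofReal (2 * T) ^ (m - 1) * ENNReal.ofReal (2 * T / (1 - δ)) := by
        gcongr; exact lintegral_Icc_rpow_neg hδ0 hδ hT
    _ = ENNReal.ofReal ((2 * T) ^ m / (1 - δ)) := by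
        rw [← ENNReal.ofReal_pow (by linarith), ← ENNReal.ofReal_mul (by positivity)]
        congr 1
        obtain ⟨k, rfl⟩ : ∃ k, m = k + 1 := ⟨m - 1, by omega⟩
        rw [Nat.add_sub_cancel, pow_succ]; ring

/-! ### Lower bounds for `q` and for the transpose of `L` -/

lemma continuous_quadraticForm {m : ℕ} (q : QuadraticForm ℝ (EuclideanSpace ℝ (Fin m))) :
    Continuous q := by
  let B := QuadraticMap.associated (R := ℝ) q
  let F : EuclideanSpace ℝ (Fin m) →ₗ[ℝ] (EuclideanSpace ℝ (Fin m) →L[ℝ] ℝ) :=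
    (LinearMap.toContinuousLinearMap : _ ≃ₗ[ℝ] _).toLinearMap ∘ₗ B
  have hF : Continuous F := F.continuous_of_finiteDimensional
  have : (q : EuclideanSpace ℝ (Fin m) → ℝ) = fun x => F x x := by
    funext x
    exact (QuadraticMap.associated_eq_self_apply ℝ q x).symm
  rw [this]
  exact hF.clm_apply continuous_id

lemma exists_quadraticForm_lower_bound {m : ℕ} (hm : 0 < m)
    (q : QuadraticForm ℝ (EuclideanSpace ℝ (Fin m))) (hq : q.PosDef) :
    ∃ κ > (0 : ℝ), ∀ s, κ * ‖s‖ ^ 2 ≤ q s := by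
  have : Nonempty (Fin m) := ⟨⟨0, hm⟩⟩
  obtain ⟨x, hx, hmin⟩ := (isCompact_sphere (0 : EuclideanSpace ℝ (Fin m)) 1).exists_isMinOn
    (NormedSpace.sphere_nonempty.mpr zero_le_one) (continuous_quadraticForm q).continuousOn
  have hx0 : x ≠ 0 := by
    rintro rfl; simp at hx
  refine ⟨q x, hq x hx0, fun s => ?_⟩
  rcases eq_or_ne s 0 with rfl | hs
  · simp
  have hs' : 0 < ‖s‖ := norm_pos_iff.mpr hs
  have h1 : ‖s‖⁻¹ • s ∈ sphere (0 : EuclideanSpace ℝ (Fin m)) 1 := by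
    simp [norm_smul, hs'.ne']
  have h2 : q x ≤ q (‖s‖⁻¹ • s) := hmin h1
  rw [QuadraticMap.map_smul, smul_eq_mul] at h2
  calc q x * ‖s‖ ^ 2 ≤ (‖s‖⁻¹ * ‖s‖⁻¹ * q s) * ‖s‖ ^ 2 := by gcongr
    _ = q s := by field_simp

lemma exists_adjoint_lower_bound {m : ℕ}
    (L : EuclideanSpace ℝ (Fin m) →ₗ[ℝ] EuclideanSpace ℝ (Fin m)) (hL : Function.Surjective L) :
    ∃ κ > (0 : ℝ), ∀ c, κ * ‖c‖ ≤ ‖LinearMap.adjoint L c‖ := by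
  have hker : LinearMap.ker (LinearMap.adjoint L) = ⊥ := by
    rw [LinearMap.ker_eq_bot']
    intro c hc
    obtain ⟨s, rfl⟩ := hL c
    rw [← inner_self_eq_zero (𝕜 := ℝ), ← LinearMap.adjoint_inner_left, hc, inner_zero_left]
  obtain ⟨K, hK0, hK⟩ := LinearMap.exists_antilipschitzWith _ hker
  refine ⟨(K : ℝ)⁻¹, by positivity, fun c => ?_⟩
  have h : ‖c‖ ≤ K * ‖LinearMap.adjoint L c‖ := by
    simpa [dist_eq_norm] using hK.le_mul_dist c 0
  have hK' : (0 : ℝ) < K := by exact_mod_cast hK0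
  rw [inv_mul_le_iff₀ hK']
  exact h

/-! ### The energy integral of `s ↦ f_s Z` over a shell -/

section Projection

variable {n : ℕ} (L : EuclideanSpace ℝ (Fin (n - 2)) →ₗ[ℝ] EuclideanSpace ℝ (Fin (n - 2)))
  (q : QuadraticForm ℝ (EuclideanSpace ℝ (Fin (n - 2))))

lemma fMap_sub (s : EuclideanSpace ℝ (Fin (n - 2))) (Z Z' : PaperSpace n) :
    fMap L q s Z - fMap L q s Z' = fMap L q s (Z - Z') := by
  ext i
  fin_cases i
  · simp [fMap]
  · simp [fMap, sub_mul, Finset.sum_sub_distrib]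
  · simp [fMap, sub_mul]

lemma sum_mul_eq_inner_adjoint (s c : EuclideanSpace ℝ (Fin (n - 2))) :
    ∑ i, c i * (L s) i = inner ℝ (LinearMap.adjoint L c) s := by
  rw [LinearMap.adjoint_inner_left, PiLp.inner_apply]
  simp [mul_comm]

lemma abs_le_norm_fMap (s : EuclideanSpace ℝ (Fin (n - 2))) (Z : PaperSpace n) :
    |Z.1| ≤ ‖fMap L q s Z‖ ∧ |inner ℝ (LinearMap.adjoint L Z.2.1) s| ≤ ‖fMap L q s Z‖ ∧
      |Z.2.2 * q s| ≤ ‖fMap L q s Z‖ := by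
  refine ⟨?_, ?_, ?_⟩
  · simpa [fMap] using PiLp.norm_apply_le (fMap L q s Z) 0
  · rw [← sum_mul_eq_inner_adjoint]
    simpa [fMap] using PiLp.norm_apply_le (fMap L q s Z) 1
  · simpa [fMap] using PiLp.norm_apply_le (fMap L q s Z) 2

lemma continuous_fMap :
    Continuous fun p : EuclideanSpace ℝ (Fin (n - 2)) × PaperSpace n => fMap L q p.1 p.2 := by
  have hL : Continuous L := L.continuous_of_finiteDimensional
  have hq := continuous_quadraticForm q
  refine (PiLp.continuous_toLp 2 _).comp (continuous_pi fun i => ?_)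
  fin_cases i
  · simp; fun_prop
  · simp; fun_prop
  · simp; fun_prop

lemma half_euclNorm_le (Z : PaperSpace n) :
    euclNorm Z / 2 ≤ |Z.1| ∨ euclNorm Z / 2 ≤ ‖Z.2.1‖ ∨ euclNorm Z / 2 ≤ |Z.2.2| := by
  by_contra! h
  obtain ⟨h1, h2, h3⟩ := h
  have hw : 0 ≤ euclNorm Z := Real.sqrt_nonneg _
  have hsq : euclNorm Z ^ 2 = Z.1 ^ 2 + ‖Z.2.1‖ ^ 2 + Z.2.2 ^ 2 := Real.sq_sqrt (by positivity)
  have e1 : Z.1 ^ 2 < (euclNorm Z / 2) ^ 2 := by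
    rw [← sq_abs]; gcongr
  have e2 : ‖Z.2.1‖ ^ 2 < (euclNorm Z / 2) ^ 2 := by gcongr
  have e3 : Z.2.2 ^ 2 < (euclNorm Z / 2) ^ 2 := by
    rw [← sq_abs Z.2.2]; gcongr
  nlinarith

/-- The shell `{r ≤ ‖s‖ ≤ T}`. -/
def shell (n : ℕ) (r T : ℝ) : Set (EuclideanSpace ℝ (Fin (n - 2))) :=
  {s | r ≤ ‖s‖ ∧ ‖s‖ ≤ T}

lemma measurableSet_shell (r T : ℝ) : MeasurableSet (shell n r T) :=
  (measurableSet_le measurable_const measurable_norm).inter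
    (measurableSet_le measurable_norm measurable_const)

lemma shell_subset_closedBall (r T : ℝ) : shell n r T ⊆ closedBall 0 T := fun s hs => by
  simpa using hs.2

/-- The constant of the shell estimate, up to the factor accounting for `L` and `q`: the volume of
the ball of radius `T`, plus that of the cube containing it. -/
noncomputable def shellConst (n : ℕ) (T : ℝ) : ℝ :=
  (volume (closedBall (0 : EuclideanSpace ℝ (Fin (n - 2))) T)).toReal + (2 * T) ^ (n - 2)

lemma shellConst_pos {T : ℝ} (hT : 1 ≤ T) : 0 < shellConst n T := by
  unfold shellConst
  positivity

/-- Under a uniform lower bound `‖f_s Z‖ ≥ b ‖Z‖` on the shell the integrand is bounded; the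
factor `1 / (1 - δ) ≥ 1` only matches the singular case. -/
lemma lintegral_fMap_le_of_lower_bound {δ T r b : ℝ} (hδ0 : 0 < δ) (hδ : δ < 1)
    (hb0 : 0 < b) (hb1 : b ≤ 1) (Z : PaperSpace n)
    (h : ∀ s ∈ shell n r T, b * euclNorm Z ≤ ‖fMap L q s Z‖) (hT : 1 ≤ T) :
    ∫⁻ s in shell n r T, ENNReal.ofReal ‖fMap L q s Z‖ ^ (-δ)
      ≤ ENNReal.ofReal (b⁻¹ * shellConst n T / (1 - δ)) *
        ENNReal.ofReal (euclNorm Z) ^ (-δ) := by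
  have hT0 : 0 ≤ T := by linarith
  have hpt : ∀ s ∈ shell n r T, ENNReal.ofReal ‖fMap L q s Z‖ ^ (-δ)
      ≤ ENNReal.ofReal b⁻¹ * ENNReal.ofReal (euclNorm Z) ^ (-δ) := by
    intro s hs
    calc ENNReal.ofReal ‖fMap L q s Z‖ ^ (-δ)
        ≤ (ENNReal.ofReal b * ENNReal.ofReal (euclNorm Z)) ^ (-δ) := by
          refine ennreal_rpow_neg_anti ?_ hδ0.le
          rw [← ENNReal.ofReal_mul hb0.le]
          exact ENNReal.ofReal_le_ofReal (h s hs)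
      _ = ENNReal.ofReal b ^ (-δ) * ENNReal.ofReal (euclNorm Z) ^ (-δ) :=
          ENNReal.mul_rpow_of_ne_top ENNReal.ofReal_ne_top ENNReal.ofReal_ne_top _
      _ ≤ _ := by
          gcongr
          rw [ENNReal.ofReal_inv_of_pos hb0]
          exact ennreal_rpow_neg_le_inv (by simpa using hb1) hδ.le
  calc _ ≤ ∫⁻ _ in shell n r T, ENNReal.ofReal b⁻¹ * ENNReal.ofReal (euclNorm Z) ^ (-δ) :=
        setLIntegral_mono' (measurableSet_shell r T) hpt
    _ = ENNReal.ofReal b⁻¹ * ENNReal.ofReal (euclNorm Z) ^ (-δ) * volume (shell n r T) := by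
        rw [setLIntegral_const]
    _ ≤ ENNReal.ofReal b⁻¹ * ENNReal.ofReal (euclNorm Z) ^ (-δ) *
          ENNReal.ofReal (shellConst n T / (1 - δ)) := by
        gcongr
        refine (measure_mono (shell_subset_closedBall r T)).trans ?_
        rw [← ENNReal.ofReal_toReal (measure_closedBall_lt_top (μ := volume)
          (x := (0 : EuclideanSpace ℝ (Fin (n - 2)))) (r := T)).ne]
        refine ENNReal.ofReal_le_ofReal ?_
        have h2 : shellConst n T ≤ shellConst n T / (1 - δ) :=
          le_div_self (shellConst_pos hT).le (by linarith) (by linarith)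
        refine le_trans ?_ h2
        unfold shellConst
        have : (0 : ℝ) ≤ (2 * T) ^ (n - 2) := by positivity
        linarith
    _ = _ := by
        rw [mul_right_comm, ← ENNReal.ofReal_mul (by positivity), mul_div_assoc]

/-- The pointwise estimate: the integral over a shell of `‖f_s Z‖^{-δ}` is controlled by
`‖Z‖^{-δ}`. The constant is split so that its dependence on `r` and `T` is explicit.
For `Z = 0` the right-hand side is `∞`. -/
lemma exists_lintegral_fMap_le (hn : 3 ≤ n) (hL : Function.Bijective L) (hq : q.PosDef) :
    ∃ A > (0 : ℝ), ∀ δ r T : ℝ, 0 < δ → δ < 1 → 0 < r → r ≤ 1 → 1 ≤ T → ∀ Z : PaperSpace n,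
      ∫⁻ s in shell n r T, ENNReal.ofReal ‖fMap L q s Z‖ ^ (-δ)
        ≤ ENNReal.ofReal (A * (r ^ 2)⁻¹ * shellConst n T / (1 - δ)) *
          ENNReal.ofReal (euclNorm Z) ^ (-δ) := by
  have hm : 0 < n - 2 := by omega
  obtain ⟨κ, hκ0, hκ⟩ := exists_adjoint_lower_bound L hL.2
  obtain ⟨μ, hμ0, hμ⟩ := exists_quadraticForm_lower_bound hm q hq
  set a : ℝ := min 1 (min κ μ) / 2 with ha
  have ha0 : 0 < a := by positivity
  have ha1 : 2 * a ≤ 1 := by rw [ha]; linarith [min_le_left 1 (min κ μ)]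
  have haκ : 2 * a ≤ κ := by
    rw [ha]; linarith [min_le_right 1 (min κ μ), min_le_left κ μ]
  have haμ : 2 * a ≤ μ := by
    rw [ha]; linarith [min_le_right 1 (min κ μ), min_le_right κ μ]
  refine ⟨a⁻¹, by positivity, fun δ r T hδ0 hδ hr0 hr1 hT Z => ?_⟩
  have hw : 0 ≤ euclNorm Z := Real.sqrt_nonneg _
  have hr2 : r ^ 2 ≤ 1 := pow_le_one₀ hr0.le hr1
  have hb0 : 0 < a * r ^ 2 := by positivity
  have hba : a * r ^ 2 ≤ a := mul_le_of_le_one_right ha0.le hr2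
  have hsc := shellConst_pos (n := n) hT
  have h1δ : 0 < 1 - δ := by linarith
  rcases half_euclNorm_le Z with h | h | h
  · rw [← mul_inv]
    refine lintegral_fMap_le_of_lower_bound L q hδ0 hδ hb0 (by linarith) Z (fun s _ => ?_) hT
    refine le_trans ?_ ((h.trans (abs_le_norm_fMap L q s Z).1))
    nlinarith
  · rcases hw.eq_or_lt with hw0 | hw0
    · rw [← hw0, ENNReal.ofReal_zero, ENNReal.zero_rpow_of_neg (by linarith),
        ENNReal.mul_top]
      · exact le_top
      · rw [ENNReal.ofReal_ne_zero_iff]; positivity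
    -- The middle component dominates: only here is the singularity of `s ↦ ‖f_s Z‖^{-δ}` real.
    set e := LinearMap.adjoint L Z.2.1 with he
    have hne : a * euclNorm Z ≤ ‖e‖ := by
      refine le_trans ?_ (hκ Z.2.1)
      have : 2 * a * (euclNorm Z / 2) ≤ κ * ‖Z.2.1‖ := by gcongr
      linarith
    have he0 : 0 < ‖e‖ := lt_of_lt_of_le (by positivity) hne
    set u := ‖e‖⁻¹ • e with hu
    have hu1 : ‖u‖ = 1 := by simp [hu, norm_smul, he0.ne']
    have hin : ∀ s, |inner ℝ e s| = ‖e‖ * |inner ℝ u s| := by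
      intro s
      rw [hu, real_inner_smul_left, abs_mul, abs_of_pos (inv_pos.mpr he0)]
      field_simp
    have hpt : ∀ s ∈ shell n r T, ENNReal.ofReal ‖fMap L q s Z‖ ^ (-δ)
        ≤ ENNReal.ofReal a⁻¹ * ENNReal.ofReal (euclNorm Z) ^ (-δ) *
          ENNReal.ofReal |inner ℝ u s| ^ (-δ) := by
      intro s _
      calc ENNReal.ofReal ‖fMap L q s Z‖ ^ (-δ)
          ≤ (ENNReal.ofReal a * ENNReal.ofReal (euclNorm Z) *
              ENNReal.ofReal |inner ℝ u s|) ^ (-δ) := by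
            refine ennreal_rpow_neg_anti ?_ hδ0.le
            rw [← ENNReal.ofReal_mul ha0.le, ← ENNReal.ofReal_mul (by positivity)]
            refine ENNReal.ofReal_le_ofReal (le_trans ?_ (abs_le_norm_fMap L q s Z).2.1)
            rw [← he, hin]
            gcongr
        _ = ENNReal.ofReal a ^ (-δ) * ENNReal.ofReal (euclNorm Z) ^ (-δ) *
              ENNReal.ofReal |inner ℝ u s| ^ (-δ) := by
            rw [ENNReal.mul_rpow_of_ne_top (ENNReal.mul_ne_top ENNReal.ofReal_ne_top
              ENNReal.ofReal_ne_top) ENNReal.ofReal_ne_top,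
              ENNReal.mul_rpow_of_ne_top ENNReal.ofReal_ne_top ENNReal.ofReal_ne_top]
        _ ≤ _ := by
            gcongr
            rw [ENNReal.ofReal_inv_of_pos ha0]
            exact ennreal_rpow_neg_le_inv (by simp; linarith) hδ.le
    calc _ ≤ ∫⁻ s in shell n r T, ENNReal.ofReal a⁻¹ * ENNReal.ofReal (euclNorm Z) ^ (-δ) *
          ENNReal.ofReal |inner ℝ u s| ^ (-δ) :=
          setLIntegral_mono' (measurableSet_shell r T) hpt
      _ ≤ ∫⁻ s in closedBall 0 T, ENNReal.ofReal a⁻¹ * ENNReal.ofReal (euclNorm Z) ^ (-δ) *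
          ENNReal.ofReal |inner ℝ u s| ^ (-δ) :=
          lintegral_mono_set (shell_subset_closedBall r T)
      _ = ENNReal.ofReal a⁻¹ * ENNReal.ofReal (euclNorm Z) ^ (-δ) *
          ∫⁻ s in closedBall 0 T, ENNReal.ofReal |inner ℝ u s| ^ (-δ) :=
          lintegral_const_mul _ (by fun_prop)
      _ ≤ ENNReal.ofReal a⁻¹ * ENNReal.ofReal (euclNorm Z) ^ (-δ) *
          ENNReal.ofReal ((2 * T) ^ (n - 2) / (1 - δ)) := by
          gcongr
          exact lintegral_ball_inner_rpow_neg hm hδ0 hδ hT u hu1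
      _ = ENNReal.ofReal (a⁻¹ * ((2 * T) ^ (n - 2) / (1 - δ))) *
          ENNReal.ofReal (euclNorm Z) ^ (-δ) := by
          rw [mul_right_comm, ← ENNReal.ofReal_mul (by positivity)]
      _ ≤ _ := by
          gcongr
          rw [mul_div_assoc]
          have h1 : (1 : ℝ) ≤ (r ^ 2)⁻¹ := (one_le_inv₀ (by positivity)).mpr hr2
          have h2 : (2 * T) ^ (n - 2) ≤ shellConst n T := by
            unfold shellConst
            linarith [ENNReal.toReal_nonneg
              (a := volume (closedBall (0 : EuclideanSpace ℝ (Fin (n - 2))) T))]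
          have h3 : a⁻¹ ≤ a⁻¹ * (r ^ 2)⁻¹ := le_mul_of_one_le_right (by positivity) h1
          gcongr
  · rw [← mul_inv]
    refine lintegral_fMap_le_of_lower_bound L q hδ0 hδ hb0 (by linarith) Z (fun s hs => ?_) hT
    refine le_trans ?_ (abs_le_norm_fMap L q s Z).2.2
    rw [abs_mul]
    have h1 : 2 * a * r ^ 2 ≤ |q s| := by
      refine le_trans ?_ ((hμ s).trans (le_abs_self _))
      have := hs.1
      gcongr
    calc a * r ^ 2 * euclNorm Z = (euclNorm Z / 2) * (2 * a * r ^ 2) := by ring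
      _ ≤ |Z.2.2| * |q s| := by gcongr

/-! ### Averaging the energy of the projected measures -/

lemma measurable_integrand (δ : ℝ) :
    Measurable fun p : EuclideanSpace ℝ (Fin (n - 2)) × PaperSpace n × PaperSpace n =>
      ENNReal.ofReal ‖fMap L q p.1 (p.2.1 - p.2.2)‖ ^ (-δ) := by
  have h : Continuous fun p : EuclideanSpace ℝ (Fin (n - 2)) × PaperSpace n × PaperSpace n =>
      fMap L q p.1 (p.2.1 - p.2.2) :=
    (continuous_fMap L q).comp (f := fun p : EuclideanSpace ℝ (Fin (n - 2)) × PaperSpace n ×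
      PaperSpace n => (p.1, p.2.1 - p.2.2)) (by fun_prop)
  exact (ENNReal.measurable_ofReal.comp h.norm.measurable).pow_const _

lemma energy3_map_eq (δ : ℝ) (ν : Measure (PaperSpace n)) [IsProbabilityMeasure ν]
    (s : EuclideanSpace ℝ (Fin (n - 2))) :
    energy3 δ (ν.map (fMap L q s)) =
      ∫⁻ p, ENNReal.ofReal ‖fMap L q s (p.1 - p.2)‖ ^ (-δ) ∂(ν.prod ν) := by
  have hf : Measurable (fMap L q s) :=
    ((continuous_fMap L q).comp (Continuous.prodMk_right s)).measurable
  have : IsProbabilityMeasure (ν.map (fMap L q s)) :=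
    Measure.isProbabilityMeasure_map hf.aemeasurable
  have hk : Measurable fun p : EuclideanSpace ℝ (Fin 3) × EuclideanSpace ℝ (Fin 3) =>
      ENNReal.ofReal ‖p.1 - p.2‖ ^ (-δ) := by fun_prop
  unfold energy3
  rw [lintegral_map hk.lintegral_prod_right' hf, lintegral_prod]
  · refine lintegral_congr fun Z => ?_
    have h := lintegral_map (hk.comp (measurable_prodMk_left (x := fMap L q s Z))) hf (μ := ν)
    simpa only [Function.comp_apply, fMap_sub] using h
  · exact ((measurable_integrand L q δ).comp measurable_prodMk_left).aemeasurable

lemma measurable_energy3_map (δ : ℝ) (ν : Measure (PaperSpace n)) [IsProbabilityMeasure ν] :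
    Measurable fun s => energy3 δ (ν.map (fMap L q s)) := by
  simp only [energy3_map_eq]
  exact (measurable_integrand L q δ).lintegral_prod_right'

lemma energy_eq (δ : ℝ) (ν : Measure (PaperSpace n)) [IsProbabilityMeasure ν] :
    energy δ ν = ∫⁻ p, ENNReal.ofReal (euclNorm (p.1 - p.2)) ^ (-δ) ∂(ν.prod ν) := by
  unfold energy
  rw [lintegral_prod]
  unfold euclNorm
  fun_prop

lemma lintegral_energy3_le {δ r T K : ℝ} (ν : Measure (PaperSpace n)) [IsProbabilityMeasure ν]
    (h : ∀ Z : PaperSpace n, ∫⁻ s in shell n r T, ENNReal.ofReal ‖fMap L q s Z‖ ^ (-δ)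
      ≤ ENNReal.ofReal K * ENNReal.ofReal (euclNorm Z) ^ (-δ)) :
    ∫⁻ s in shell n r T, energy3 δ (ν.map (fMap L q s)) ≤ ENNReal.ofReal K * energy δ ν := by
  simp only [energy3_map_eq]
  rw [lintegral_lintegral_swap (measurable_integrand L q δ).aemeasurable, energy_eq,
    ← lintegral_const_mul' _ _ ENNReal.ofReal_ne_top]
  exact lintegral_mono fun p => h _

end Projection

/-- energies of the projected measures `f_sν`. -/
theorem stmt4 (n : ℕ) (hn : 3 ≤ n)
    (L : EuclideanSpace ℝ (Fin (n - 2)) →ₗ[ℝ] EuclideanSpace ℝ (Fin (n - 2)))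
    (hL : Function.Bijective L)
    (q : QuadraticForm ℝ (EuclideanSpace ℝ (Fin (n - 2)))) (hq : q.PosDef) :
    ∃ C₀ > (0 : ℝ),
      ∀ (δ C : ℝ), 0 < δ → δ < 1 → 1 ≤ C →
      ∀ ν : Measure (PaperSpace n), IsProbabilityMeasure ν →
        ν {Z | 1 < euclNorm Z} = 0 →
        energy δ ν ≤ ENNReal.ofReal C →
        (∀ (ℓ : ℕ) (R : ℝ), 0 < R →
          volume {s ∈ Cyl n ℓ | ENNReal.ofReal R < energy3 δ (ν.map (fMap L q s))}
            ≤ ENNReal.ofReal (C₀ * 2 ^ (2 * ℓ) * C / (1 - δ) / R)) ∧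
        ∀ᵐ s ∂(volume : Measure (EuclideanSpace ℝ (Fin (n - 2)))),
          energy3 δ (ν.map (fMap L q s)) < ⊤ := by
  obtain ⟨A, hA0, hA⟩ := exists_lintegral_fMap_le L q hn hL hq
  have hsc := shellConst_pos (n := n) (T := 2) (by norm_num)
  refine ⟨A * shellConst n 2, by positivity, ?_⟩
  intro δ C hδ0 hδ hC ν hν _ hE
  have h1δ : 0 < 1 - δ := by linarith
  have key : ∀ r T : ℝ, 0 < r → r ≤ 1 → 1 ≤ T →
      ∫⁻ s in shell n r T, energy3 δ (ν.map (fMap L q s))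
        ≤ ENNReal.ofReal (A * (r ^ 2)⁻¹ * shellConst n T / (1 - δ) * C) := by
    intro r T hr0 hr1 hT
    have hT' := shellConst_pos (n := n) hT
    refine (lintegral_energy3_le L q ν (hA δ r T hδ0 hδ hr0 hr1 hT)).trans ?_
    rw [ENNReal.ofReal_mul (by positivity)]
    gcongr
  have hmeas := measurable_energy3_map L q δ ν
  refine ⟨fun ℓ R hR => ?_, ?_⟩
  · have hr1 : (2 : ℝ) ^ (-(ℓ : ℤ)) ≤ 1 := zpow_le_one_of_nonpos₀ (by norm_num) (by simp)
    have hsub : {s ∈ Cyl n ℓ | ENNReal.ofReal R < energy3 δ (ν.map (fMap L q s))} ⊆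
        {s | ENNReal.ofReal R ≤ energy3 δ (ν.map (fMap L q s))} ∩
          shell n ((2 : ℝ) ^ (-(ℓ : ℤ))) 2 := by
      rintro s ⟨⟨h1, h2⟩, h3⟩
      refine ⟨h3.le, h1, h2.trans ?_⟩
      rw [zpow_add₀ (by norm_num), zpow_one]
      linarith
    calc _ ≤ _ := measure_mono hsub
      _ ≤ _ := Measure.le_restrict_apply _ _
      _ ≤ _ := meas_ge_le_lintegral_div hmeas.aemeasurable
          (ENNReal.ofReal_pos.mpr hR).ne' ENNReal.ofReal_ne_top
      _ ≤ _ := ENNReal.div_le_div_right (key _ 2 (by positivity) hr1 (by norm_num)) _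
      _ = _ := by
          rw [← ENNReal.ofReal_div_of_pos hR]
          congr 1
          have : (((2 : ℝ) ^ (-(ℓ : ℤ))) ^ 2)⁻¹ = 2 ^ (2 * ℓ) := by
            rw [zpow_neg, zpow_natCast, inv_pow, inv_inv, ← pow_mul, mul_comm]
          rw [this]
          ring
  · -- The cylinders only cover the ball of radius `2`, so the shells `1/(k+1) ≤ ‖s‖ ≤ k+1` are used instead.
    have : Nonempty (Fin (n - 2)) := ⟨⟨0, by omega⟩⟩
    have hk : ∀ k : ℕ, ∀ᵐ s ∂(volume : Measure (EuclideanSpace ℝ (Fin (n - 2)))),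
        s ∈ shell n (1 / ((k : ℝ) + 1)) (k + 1) →
          energy3 δ (ν.map (fMap L q s)) < ⊤ := by
      intro k
      rw [← ae_restrict_iff' (measurableSet_shell _ _)]
      have hk0 : (0 : ℝ) ≤ k := Nat.cast_nonneg k
      exact ae_lt_top hmeas (ne_top_of_le_ne_top ENNReal.ofReal_ne_top
        (key _ _ (by positivity) (by rw [div_le_one (by positivity)]; linarith) (by linarith)))
    have h0 : ∀ᵐ s ∂(volume : Measure (EuclideanSpace ℝ (Fin (n - 2)))), s ≠ 0 := by
      simp [ae_iff]
    filter_upwards [ae_all_iff.mpr hk, h0] with s hs hs0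
    obtain ⟨k₁, hk₁⟩ := exists_nat_one_div_lt (norm_pos_iff.mpr hs0)
    obtain ⟨k₂, hk₂⟩ := exists_nat_ge ‖s‖
    refine hs (max k₁ k₂) ⟨le_trans ?_ hk₁.le, hk₂.trans ?_⟩
    · push_cast
      gcongr
      exact le_max_left _ _
    · push_cast
      linarith [le_max_right (k₁ : ℝ) k₂]
end

section
/- Let 1/2 < δ < 1. There exists a constant C depending only on n and δ such that for every nonzero Z = (r₁, c, r₂) ∈ ℝⁿ and every t > 0, ∫_{{s ∈ ℝ^{n−2} : ∥s∥ ≤ 1}} ∥Ad(a_t u_s)Z∥^{−δ} ds ≤ C·e^{t(δ−1)}·∥Z∥^{−δ}, where the integral is with respect to Lebesgue measure on ℝ^{n−2}. -/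
/-!
Along one coordinate `x = s_i`, with the other coordinates of `s` fixed, the first entry of
`Ad(a_t u_s) Z` is `e^t q(x)` for a quadratic `q(x) = r₂ x² / 2 + c_i x + k`, while the `i`-th middle
entry is `q'(x)` and the last entry is `e^{-t} r₂`. Put `μ = max |r₂| |c_i|`.

The key fact (`quad_lower`) is that, whatever `k` is, there are two points `x₁, x₂` such that
`|q(x)| ≥ (μ / 4) min ((x - x₁)², (x - x₂)²)` on `[-1, 1]`. If `r₂` is comparable to `μ`, complete
the square and use `|v² - ρ²| = ||v| - ρ| (|v| + ρ) ≥ (|v| - ρ)²`; otherwise `q` is monotone with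
slope at least `μ / 2`. Since `max |q'(x)| (e^{-t} |r₂|) ≥ e^{-t} μ / 2`, the norm is bounded below
by `(μ / 8) e^{-t} (1 + (e^t (x - x_j))²)` for `j = 1` or `2`. Raising this to the power `-δ` and
substituting `z = e^t (x - x_j)` gives the one-variable bound `oneVar`, of size
`μ^{-δ} e^{t (δ - 1)}`; the integral `∫ (1 + z²)^{-δ}` converges because `δ > 1 / 2`.

Choosing `i` with `|c_i|` maximal and integrating over the other coordinates settles the case where
`μ` is at least a fixed multiple of `∥Z∥`. Otherwise `|r₁| = ∥Z∥` dominates, the first entry is at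
least `e^t ∥Z∥ / 2` on the whole ball, and `e^{-tδ} ≤ e^{t (δ - 1)}`.
-/

open MeasureTheory Metric

/-- The max norm `∥(r₁,c,r₂)∥ = max(|r₁|, max_i |c_i|, |r₂|)`. -/
noncomputable def maxNorm {n : ℕ} (Z : PaperSpace n) : ℝ :=
  max |Z.1| (max (⨆ i, |Z.2.1 i|) |Z.2.2|)

/-- The adjoint action
`Ad(a_t u_s)(r₁,c,r₂) = (e^t(r₁ + s·c + r₂∥s∥²/2), c + r₂s, e^{−t}r₂)`. -/
noncomputable def AdAU {n : ℕ} (t : ℝ) (s : EuclideanSpace ℝ (Fin (n - 2)))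
    (Z : PaperSpace n) : PaperSpace n :=
  (Real.exp t * (Z.1 + (∑ i, s i * Z.2.1 i) + Z.2.2 * ‖s‖ ^ 2 / 2),
   Z.2.1 + Z.2.2 • s,
   Real.exp (-t) * Z.2.2)

/-! ### Lower bounds for quadratics on `[-1, 1]` -/

/-- The case where the linear coefficient dominates: on `[-1, 1]` the quadratic is increasing
with slope at least `b / 2`, so it grows linearly away from its zero `x₀`, or away from an endpoint
`x₀` if it has no zero there; and `|x - x₀| ≤ 2` allows a linear bound to be weakened to a
quadratic one. -/
theorem quad_lower_of_pos (a b k : ℝ) (hab : 2 * |a| < |b|) (hb : 0 < b) :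
    ∃ x₀ : ℝ, ∀ x, |x| ≤ 1 → |b| / 4 * (x - x₀) ^ 2 ≤ |a / 2 * x ^ 2 + b * x + k| := by
  rw [abs_of_pos hb] at *
  have ha : -b ≤ 2 * a ∧ 2 * a ≤ b := by
    constructor <;> linarith [neg_abs_le a, le_abs_self a]
  obtain ⟨ha1, ha2⟩ := ha
  -- On `[-1, 1]` the slope of the quadratic is at least `b / 2`.
  have key : ∀ x y : ℝ, |x| ≤ 1 → |y| ≤ 1 → y ≤ x →
      b / 4 * (x - y) ^ 2 ≤ (a / 2 * x ^ 2 + b * x + k) - (a / 2 * y ^ 2 + b * y + k) := by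
    intro x y hx hy hxy
    rw [abs_le] at hx hy
    have h1 : (a / 2 * x ^ 2 + b * x + k) - (a / 2 * y ^ 2 + b * y + k)
        = (x - y) * (b + a / 2 * (x + y)) := by ring
    have h2 : b / 2 ≤ b + a / 2 * (x + y) := by
      rcases le_total 0 (x + y) with h | h <;> nlinarith
    rw [h1]
    have h3 : b / 4 * (x - y) ≤ b + a / 2 * (x + y) := by nlinarith
    calc b / 4 * (x - y) ^ 2 = (x - y) * (b / 4 * (x - y)) := by ring
      _ ≤ _ := by gcongr
  have hm1 : |(-1 : ℝ)| ≤ 1 := by norm_num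
  have hp1 : |(1 : ℝ)| ≤ 1 := by norm_num
  by_cases h0 : 0 ≤ a / 2 * (-1) ^ 2 + b * (-1) + k
  · refine ⟨-1, fun x hx => ?_⟩
    have := key x (-1) hx hm1 (abs_le.1 hx).1
    exact le_trans (by linarith) (le_abs_self _)
  by_cases h1 : a / 2 * 1 ^ 2 + b * 1 + k ≤ 0
  · refine ⟨1, fun x hx => ?_⟩
    have := key 1 x hp1 hx (abs_le.1 hx).2
    refine le_trans ?_ (neg_le_abs _)
    nlinarith
  push Not at h0 h1
  obtain ⟨x₀, hx₀, hz⟩ := intermediate_value_Icc (show (-1 : ℝ) ≤ 1 by norm_num)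
    (f := fun x => a / 2 * x ^ 2 + b * x + k) (by fun_prop) ⟨h0.le, h1.le⟩
  have hx₀' : |x₀| ≤ 1 := abs_le.2 hx₀
  simp only at hz
  refine ⟨x₀, fun x hx => ?_⟩
  rcases le_total x₀ x with h | h
  · have := key x x₀ hx hx₀' h
    exact le_trans (by linarith) (le_abs_self _)
  · have := key x₀ x hx₀' hx h
    refine le_trans ?_ (neg_le_abs _)
    nlinarith

/-- A quadratic is bounded below on `[-1, 1]` by the squared distance to the nearer of two points,
with a constant proportional to its larger non-constant coefficient and independent of `k`. -/
theorem quad_lower (a b k : ℝ) :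
    ∃ x₁ x₂ : ℝ, ∀ x, |x| ≤ 1 →
      max |a| |b| / 4 * (x - x₁) ^ 2 ≤ |a / 2 * x ^ 2 + b * x + k| ∨
      max |a| |b| / 4 * (x - x₂) ^ 2 ≤ |a / 2 * x ^ 2 + b * x + k| := by
  by_cases hab : 2 * |a| < |b|
  · have hb0 : b ≠ 0 := by
      rintro rfl
      have := abs_nonneg a
      simp at hab; linarith
    have hmax : max |a| |b| = |b| := max_eq_right (by have := abs_nonneg a; linarith)
    rw [hmax]
    rcases lt_or_gt_of_ne hb0 with hb | hb
    · obtain ⟨x₀, h⟩ := quad_lower_of_pos (-a) (-b) (-k) (by simpa using hab) (by linarith)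
      refine ⟨x₀, x₀, fun x hx => Or.inl ?_⟩
      have := h x hx
      have e : -a / 2 * x ^ 2 + -b * x + -k = -(a / 2 * x ^ 2 + b * x + k) := by ring
      rwa [e, abs_neg, abs_neg] at this
    · obtain ⟨x₀, h⟩ := quad_lower_of_pos a b k hab hb
      exact ⟨x₀, x₀, fun x hx => Or.inl (h x hx)⟩
  · push Not at hab
    by_cases ha : a = 0
    · subst ha
      have : b = 0 := by simpa using hab
      subst this
      exact ⟨0, 0, fun x _ => by simp⟩
    have hm : max |a| |b| ≤ 2 * |a| := max_le (by have := abs_nonneg a; linarith) hab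
    -- Completing the square, `q = (a / 2) (v² - D)` with `v = x + b / a`.
    set D : ℝ := (b / a) ^ 2 - 2 * k / a with hD
    have hq : ∀ x, |a / 2 * x ^ 2 + b * x + k| = |a| / 2 * |(x + b / a) ^ 2 - D| := by
      intro x
      rw [← abs_two, ← abs_div, ← abs_mul, abs_two]
      congr 1
      rw [hD]; field_simp; ring
    set ρ := Real.sqrt D
    have hρ0 : 0 ≤ ρ := Real.sqrt_nonneg D
    refine ⟨-(b / a) + ρ, -(b / a) - ρ, fun x _ => ?_⟩
    rw [hq]
    set v := x + b / a with hv
    have e1 : x - (-(b / a) + ρ) = v - ρ := by rw [hv]; ring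
    have e2 : x - (-(b / a) - ρ) = v + ρ := by rw [hv]; ring
    rw [e1, e2]
    have fin : ∀ w : ℝ, w ^ 2 ≤ |v ^ 2 - D| →
        max |a| |b| / 4 * w ^ 2 ≤ |a| / 2 * |v ^ 2 - D| := by
      intro w hw
      have : max |a| |b| / 4 ≤ |a| / 2 := by linarith
      gcongr
    -- `|v² - ρ²| = ||v| - ρ| (|v| + ρ) ≥ (|v| - ρ)²`.
    have main : (|v| - ρ) ^ 2 ≤ |v ^ 2 - D| := by
      rcases le_total 0 D with h | h
      · have : v ^ 2 - D = (|v| - ρ) * (|v| + ρ) := by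
          have := Real.sq_sqrt h
          have := sq_abs v
          nlinarith
        rw [this, abs_mul, ← sq_abs, sq]
        refine mul_le_mul_of_nonneg_left ?_ (abs_nonneg _)
        rw [abs_of_nonneg (a := |v| + ρ) (by positivity), abs_le]
        constructor <;> linarith [abs_nonneg v]
      · have : ρ = 0 := Real.sqrt_eq_zero_of_nonpos h
        rw [this, sub_zero, sq_abs]
        exact le_trans (by linarith) (le_abs_self _)
    rcases le_total 0 v with h | h
    · left; apply fin; rwa [abs_of_nonneg h] at main
    · right; apply fin; rw [abs_of_nonpos h] at main; nlinarith

/-! ### The one-variable integral -/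

theorem lintegral_bracket (δ T x₁ : ℝ) (hT : 0 < T) :
    ∫⁻ x : ℝ, ENNReal.ofReal ((1 + (T * (x - x₁)) ^ 2) ^ (-δ)) =
      ENNReal.ofReal T⁻¹ * ∫⁻ x : ℝ, ENNReal.ofReal ((1 + x ^ 2) ^ (-δ)) := by
  rw [lintegral_sub_right_eq_self (μ := (volume : Measure ℝ))
    (fun x : ℝ => ENNReal.ofReal ((1 + (T * x) ^ 2) ^ (-δ))) x₁]
  have h2 := Real.map_volume_mul_left hT.ne'
  have h3 : ∫⁻ x : ℝ, ENNReal.ofReal ((1 + (T * x) ^ 2) ^ (-δ)) =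
      ∫⁻ x : ℝ, ENNReal.ofReal ((1 + x ^ 2) ^ (-δ)) ∂(Measure.map (T * ·) volume) := by
    rw [lintegral_map (by fun_prop) (by fun_prop)]
  rw [h3, h2, lintegral_smul_measure, abs_of_pos (inv_pos.2 hT), smul_eq_mul]

/-- This is where `δ > 1 / 2` is needed. -/
theorem bracket_ne_top (δ : ℝ) (hδ : 1 / 2 < δ) :
    ∫⁻ x : ℝ, ENNReal.ofReal ((1 + x ^ 2) ^ (-δ)) ≠ ⊤ := by
  have h := integrable_rpow_neg_one_add_norm_sq (E := ℝ) (μ := volume) (r := 2 * δ)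
    (by simp; linarith)
  have h2 := h.lintegral_lt_top.ne
  have e : -(2 * δ) / 2 = -δ := by ring
  simpa only [Real.norm_eq_abs, sq_abs, e] using h2

/-- The one-variable estimate, uniform in the constant term `k`. The hypotheses `h1`, `h2`, `h3`
are the lower bounds given by the first, a middle, and the last coordinate of `Ad(a_t u_s) Z`. -/
theorem oneVar (δ : ℝ) (hδ : 1 / 2 < δ) (t a b k : ℝ) (ht : 0 < t)
    (hm : 0 < max |a| |b|) (F : ℝ → ℝ)
    (h1 : ∀ x, |x| ≤ 1 → Real.exp t * |a / 2 * x ^ 2 + b * x + k| ≤ F x)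
    (h2 : ∀ x, |x| ≤ 1 → |b + a * x| ≤ F x)
    (h3 : ∀ x, |x| ≤ 1 → Real.exp (-t) * |a| ≤ F x) :
    ∫⁻ x in Set.Icc (-1 : ℝ) 1, ENNReal.ofReal (F x ^ (-δ)) ≤
      ENNReal.ofReal (2 * (max |a| |b| / 8) ^ (-δ) * Real.exp (t * (δ - 1))) *
        ∫⁻ x : ℝ, ENNReal.ofReal ((1 + x ^ 2) ^ (-δ)) := by
  obtain ⟨x₁, x₂, hx⟩ := quad_lower a b k
  set m := max |a| |b| with hmdef
  set T := Real.exp t with hT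
  have hTp : 0 < T := Real.exp_pos t
  have hT1 : 1 ≤ T := Real.one_le_exp ht.le
  have hTi : Real.exp (-t) = T⁻¹ := Real.exp_neg t
  set A : ℝ := (m / 8) ^ (-δ) * Real.exp (t * δ) with hA
  have hA0 : 0 ≤ A := by positivity
  -- The floor coming from the derivative of the quadratic and from the last coordinate.
  have floor : ∀ x, |x| ≤ 1 → T⁻¹ * (m / 2) ≤ F x := by
    intro x hx1
    by_cases ha : m / 2 ≤ |a|
    · refine le_trans ?_ (h3 x hx1)
      rw [hTi]; gcongr
    · refine le_trans ?_ (h2 x hx1)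
      push Not at ha
      have hb : |b| = m := by
        rcases max_choice |a| |b| with h | h
        · rw [← hmdef] at h; linarith
        · exact h.symm
      have : |a * x| ≤ |a| := by
        rw [abs_mul]; exact mul_le_of_le_one_right (abs_nonneg _) hx1
      have h4 : |b| - |a * x| ≤ |b + a * x| := by
        have := abs_sub_abs_le_abs_sub b (-(a * x))
        rwa [abs_neg, sub_neg_eq_add] at this
      have h5 : T⁻¹ ≤ 1 := inv_le_one_of_one_le₀ hT1
      nlinarith
  have pt : ∀ x y, |x| ≤ 1 → m / 4 * (x - y) ^ 2 ≤ |a / 2 * x ^ 2 + b * x + k| →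
      F x ^ (-δ) ≤ A * (1 + (T * (x - y)) ^ 2) ^ (-δ) := by
    intro x y hx1 hq
    -- `max (e^t y²) e^{-t} ≥ e^{-t} (1 + (e^t y)²) / 2` applied with `x - y` in place of `y`.
    have hF : m / 8 * T⁻¹ * (1 + (T * (x - y)) ^ 2) ≤ F x := by
      have g1 := h1 x hx1
      have g2 := floor x hx1
      have g3 : T * (m / 4 * (x - y) ^ 2) ≤ F x := le_trans (by gcongr) g1
      have g4 : m / 8 * T⁻¹ * (1 + (T * (x - y)) ^ 2)
          = (T⁻¹ * (m / 2)) / 4 + T * (m / 4 * (x - y) ^ 2) / 2 := by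
        field_simp; ring
      have g5 : 0 < T⁻¹ * (m / 2) := by positivity
      rw [g4]; linarith
    calc F x ^ (-δ) ≤ (m / 8 * T⁻¹ * (1 + (T * (x - y)) ^ 2)) ^ (-δ) :=
          Real.rpow_le_rpow_of_nonpos (by positivity) hF (by linarith)
      _ = A * (1 + (T * (x - y)) ^ 2) ^ (-δ) := by
          rw [Real.mul_rpow (by positivity) (by positivity),
            Real.mul_rpow (by positivity) (by positivity), hA, ← hTi, ← Real.exp_mul]
          congr 3; ring
  set J := ∫⁻ x : ℝ, ENNReal.ofReal ((1 + x ^ 2) ^ (-δ)) with hJ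
  calc ∫⁻ x in Set.Icc (-1 : ℝ) 1, ENNReal.ofReal (F x ^ (-δ))
      ≤ ∫⁻ x in Set.Icc (-1 : ℝ) 1, (ENNReal.ofReal A *
            ENNReal.ofReal ((1 + (T * (x - x₁)) ^ 2) ^ (-δ)) + ENNReal.ofReal A *
            ENNReal.ofReal ((1 + (T * (x - x₂)) ^ 2) ^ (-δ))) := by
        refine setLIntegral_mono' measurableSet_Icc fun x hxI => ?_
        have hx1 : |x| ≤ 1 := abs_le.2 hxI
        rw [← ENNReal.ofReal_mul hA0, ← ENNReal.ofReal_mul hA0]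
        rcases hx x hx1 with h | h
        · exact le_add_right (ENNReal.ofReal_le_ofReal (pt x x₁ hx1 h))
        · exact le_add_left (ENNReal.ofReal_le_ofReal (pt x x₂ hx1 h))
    _ ≤ ∫⁻ x, (ENNReal.ofReal A *
            ENNReal.ofReal ((1 + (T * (x - x₁)) ^ 2) ^ (-δ)) + ENNReal.ofReal A *
            ENNReal.ofReal ((1 + (T * (x - x₂)) ^ 2) ^ (-δ))) := setLIntegral_le_lintegral _ _
    _ = ENNReal.ofReal A * (ENNReal.ofReal T⁻¹ * J) +
          ENNReal.ofReal A * (ENNReal.ofReal T⁻¹ * J) := by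
        rw [lintegral_add_left (by fun_prop), lintegral_const_mul _ (by fun_prop),
          lintegral_const_mul _ (by fun_prop), lintegral_bracket _ _ _ hTp,
          lintegral_bracket _ _ _ hTp]
    _ = _ := by
        rw [← mul_assoc, ← ENNReal.ofReal_mul hA0, ← add_mul, ← ENNReal.ofReal_add
          (by positivity) (by positivity)]
        congr 2
        have : Real.exp (t * (δ - 1)) = Real.exp (t * δ) * T⁻¹ := by
          rw [← hTi, ← Real.exp_add]; congr 1; ring
        rw [this, hA]; ring

/-! ### Integration over the ball -/

/-- Fubini along the `i`-th coordinate: the unit ball lies in the cube `[-1, 1]^(m+1)`, so a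
uniform bound `K` for the integrals over the segments parallel to that axis gives `2 ^ m * K`. -/
theorem fubini_ball {m : ℕ} (i : Fin (m + 1)) (g : EuclideanSpace ℝ (Fin (m + 1)) → ENNReal)
    (hg : Measurable g) (K : ENNReal)
    (hK : ∀ s' : Fin m → ℝ,
      ∫⁻ x in Set.Icc (-1 : ℝ) 1, g (WithLp.toLp 2 (i.insertNth x s')) ≤ K) :
    ∫⁻ s in closedBall (0 : EuclideanSpace ℝ (Fin (m + 1))) 1, g s ≤ 2 ^ m * K := by
  set S : Set (Fin m → ℝ) := Set.pi Set.univ fun _ => Set.Icc (-1 : ℝ) 1 with hS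
  have hSm : MeasurableSet S := MeasurableSet.univ_pi fun _ => measurableSet_Icc
  have hSv : volume S = 2 ^ m := by
    rw [hS, volume_pi_pi]
    simp only [Real.volume_Icc, Finset.prod_const, Finset.card_univ, Fintype.card_fin]
    norm_num
  set G := (closedBall (0 : EuclideanSpace ℝ (Fin (m + 1))) 1).indicator g with hG
  have hGm : Measurable G := hg.indicator measurableSet_closedBall
  have hHm : Measurable fun v : Fin (m + 1) → ℝ => G (WithLp.toLp 2 v) :=
    hGm.comp (PiLp.volume_preserving_toLp (Fin (m + 1))).measurable
  rw [← lintegral_indicator measurableSet_closedBall,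
    ← (PiLp.volume_preserving_toLp (Fin (m + 1))).lintegral_comp hGm,
    ← (volume_preserving_piFinSuccAbove (fun _ : Fin (m + 1) => ℝ) i).symm.lintegral_comp hHm,
    Measure.volume_eq_prod,
    lintegral_prod_symm' (fun p : ℝ × (Fin m → ℝ) => G (WithLp.toLp 2
        ((MeasurableEquiv.piFinSuccAbove (fun _ : Fin (m + 1) => ℝ) i).symm p)))
      (hHm.comp (MeasurableEquiv.piFinSuccAbove (fun _ : Fin (m + 1) => ℝ) i).symm.measurable)]
  calc _ ≤ ∫⁻ s' : Fin m → ℝ, S.indicator (fun _ => K) s' := by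
        refine lintegral_mono fun s' => ?_
        change ∫⁻ x : ℝ, G (WithLp.toLp 2 (i.insertNth x s')) ≤ _
        have hmem : ∀ x : ℝ, WithLp.toLp 2 (i.insertNth x s' : Fin (m + 1) → ℝ) ∈
            closedBall (0 : EuclideanSpace ℝ (Fin (m + 1))) 1 →
            x ∈ Set.Icc (-1 : ℝ) 1 ∧ s' ∈ S := by
          intro x hx
          rw [mem_closedBall_zero_iff] at hx
          have hc := fun j => (PiLp.norm_apply_le
            (WithLp.toLp 2 (i.insertNth x s' : Fin (m + 1) → ℝ)) j).trans hx
          refine ⟨abs_le.1 (by simpa using hc i), fun j _ => abs_le.1 ?_⟩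
          simpa using hc (i.succAbove j)
        by_cases hs : s' ∈ S
        · rw [Set.indicator_of_mem hs]
          refine le_trans ?_ (hK s')
          rw [← lintegral_indicator measurableSet_Icc]
          refine lintegral_mono fun x => ?_
          by_cases hx : WithLp.toLp 2 (i.insertNth x s' : Fin (m + 1) → ℝ) ∈
              closedBall (0 : EuclideanSpace ℝ (Fin (m + 1))) 1
          · rw [hG, Set.indicator_of_mem hx, Set.indicator_of_mem (hmem x hx).1]
          · rw [hG, Set.indicator_of_notMem hx]
            exact zero_le
        · rw [Set.indicator_of_notMem hs]
          refine (lintegral_eq_zero_of_ae_eq_zero (Filter.Eventually.of_forall fun x => ?_)).le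
          exact Set.indicator_of_notMem (fun h => hs (hmem x h).2) _
    _ = 2 ^ m * K := by
        rw [lintegral_indicator hSm, setLIntegral_const, hSv, mul_comm]

/-- The estimate in coordinates. It is proved by distinguishing whether the largest of `|r₂|` and
the `|c i|` is comparable to `M` (then `oneVar` and `fubini_ball` apply, along a coordinate `i`
at which `|c i|` is maximal) or `|r₁| = M` dominates (then the integrand is pointwise small). -/
theorem core (d : ℕ) (hd : 0 < d) (δ : ℝ) (hδ : 1 / 2 < δ) (hδ1 : δ < 1) :
    ∃ C > (0 : ℝ), ∀ (r₁ r₂ : ℝ) (c : EuclideanSpace ℝ (Fin d)) (t M : ℝ), 0 < t → 0 < M →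
      M = max |r₁| (max (⨆ i, |c i|) |r₂|) →
      ∫ s in closedBall (0 : EuclideanSpace ℝ (Fin d)) 1,
        (max |Real.exp t * (r₁ + (∑ i, s i * c i) + r₂ * ‖s‖ ^ 2 / 2)|
          (max (⨆ i, |(c + r₂ • s) i|) |Real.exp (-t) * r₂|)) ^ (-δ)
        ≤ C * Real.exp (t * (δ - 1)) * M ^ (-δ) := by
  obtain ⟨m, rfl⟩ : ∃ m, d = m + 1 := ⟨d - 1, by omega⟩
  set J := ∫⁻ x : ℝ, ENNReal.ofReal ((1 + x ^ 2) ^ (-δ)) with hJ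
  have hJt : J ≠ ⊤ := bracket_ne_top δ hδ
  set V := (volume : Measure (EuclideanSpace ℝ (Fin (m + 1)))).real (closedBall 0 1) with hV
  have hV0 : 0 ≤ V := measureReal_nonneg
  -- `ε` is small enough for `|∑ s_j c_j| ≤ M / 4` to follow from `|c_j| < ε M` and `|s_j| ≤ 1`.
  set ε : ℝ := 1 / (4 * (m + 1)) with hε
  have hε0 : 0 < ε := by positivity
  set C₁ : ℝ := 2 ^ m * (2 * (ε / 8) ^ (-δ) * J.toReal) with hC₁
  set C₂ : ℝ := (1 / 2) ^ (-δ) * V with hC₂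
  have hC₁0 : 0 ≤ C₁ := by positivity
  have hC₂0 : 0 ≤ C₂ := by positivity
  refine ⟨C₁ + C₂ + 1, by positivity, ?_⟩
  intro r₁ r₂ c t M ht hM hMdef
  set F : EuclideanSpace ℝ (Fin (m + 1)) → ℝ := fun s =>
    max |Real.exp t * (r₁ + (∑ i, s i * c i) + r₂ * ‖s‖ ^ 2 / 2)|
      (max (⨆ i, |(c + r₂ • s) i|) |Real.exp (-t) * r₂|) with hF
  change ∫ s in closedBall (0 : EuclideanSpace ℝ (Fin (m + 1))) 1, F s ^ (-δ) ≤ _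
  have hF0 : ∀ s, 0 ≤ F s := fun s => (abs_nonneg _).trans (le_max_left _ _)
  obtain ⟨i, hi⟩ := exists_eq_ciSup_of_finite (f := fun i => |c i|)
  have hci : ∀ j, |c j| ≤ |c i| := fun j => by
    rw [show |c i| = _ from hi]
    exact le_ciSup (f := fun i => |c i|) (Set.finite_range _).bddAbove j
  rw [← hi] at hMdef
  set μ := max |r₂| |c i| with hμ
  by_cases hcase : ε * M ≤ μ
  · -- The vector is not concentrated on the `r₁`-coordinate.
    have hμ0 : 0 < μ := lt_of_lt_of_le (by positivity) hcase
    have hmeas : Measurable F := by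
      have : ∀ i, Measurable fun s : EuclideanSpace ℝ (Fin (m + 1)) => |(c + r₂ • s) i| := by
        intro i
        simp only [PiLp.add_apply, PiLp.smul_apply]
        fun_prop
      have h2 : Measurable fun s : EuclideanSpace ℝ (Fin (m + 1)) => ⨆ i, |(c + r₂ • s) i| :=
        Measurable.iSup this
      fun_prop
    have hfub := fubini_ball i (fun s => ENNReal.ofReal (F s ^ (-δ))) (by fun_prop)
      (ENNReal.ofReal (2 * (μ / 8) ^ (-δ) * Real.exp (t * (δ - 1))) * J) (by
        intro s'
        have hco : ∀ x : ℝ, |c i + r₂ * x| ≤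
            ⨆ j, |(c + r₂ • WithLp.toLp 2 (i.insertNth x s' : Fin (m + 1) → ℝ)) j| := by
          intro x
          refine le_trans (le_of_eq ?_) (le_ciSup (f := fun j =>
            |(c + r₂ • WithLp.toLp 2 (i.insertNth x s' : Fin (m + 1) → ℝ)) j|)
            (Set.finite_range _).bddAbove i)
          simp
        refine oneVar δ hδ t r₂ (c i)
          (r₁ + (∑ j, s' j * c (i.succAbove j)) + r₂ * (∑ j, s' j ^ 2) / 2) ht hμ0
          (fun x => F (WithLp.toLp 2 (i.insertNth x s'))) ?_ ?_ ?_
        · intro x _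
          refine le_trans (le_of_eq ?_) (le_max_left _ _)
          rw [abs_mul, abs_of_pos (Real.exp_pos t), EuclideanSpace.norm_sq_eq,
            Fin.sum_univ_succAbove _ i, Fin.sum_univ_succAbove _ i]
          simp only [Fin.insertNth_apply_same, Fin.insertNth_apply_succAbove,
            Real.norm_eq_abs, sq_abs]
          congr 2
          ring
        · intro x _
          exact (hco x).trans ((le_max_left _ _).trans (le_max_right _ _))
        · intro x _
          refine le_trans (le_of_eq ?_) ((le_max_right _ _).trans (le_max_right _ _))
          rw [abs_mul, abs_of_pos (Real.exp_pos _)])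
    have hμM : (μ / 8) ^ (-δ) ≤ (ε / 8) ^ (-δ) * M ^ (-δ) := by
      rw [← Real.mul_rpow (by positivity) hM.le]
      exact Real.rpow_le_rpow_of_nonpos (by positivity) (by linarith) (by linarith)
    -- The bound by the `lintegral` of the norm holds without integrability (the integral is `0` then).
    calc ∫ s in closedBall (0 : EuclideanSpace ℝ (Fin (m + 1))) 1, F s ^ (-δ)
        ≤ (∫⁻ s in closedBall (0 : EuclideanSpace ℝ (Fin (m + 1))) 1,
            ENNReal.ofReal ‖F s ^ (-δ)‖).toReal :=
          (Real.le_norm_self _).trans (norm_integral_le_lintegral_norm _)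
      _ = (∫⁻ s in closedBall (0 : EuclideanSpace ℝ (Fin (m + 1))) 1,
            ENNReal.ofReal (F s ^ (-δ))).toReal := by
          simp_rw [Real.norm_of_nonneg (Real.rpow_nonneg (hF0 _) _)]
      _ ≤ (2 ^ m * (ENNReal.ofReal (2 * (μ / 8) ^ (-δ) * Real.exp (t * (δ - 1))) * J)).toReal :=
          ENNReal.toReal_mono (by finiteness) hfub
      _ = 2 ^ m * (2 * (μ / 8) ^ (-δ) * Real.exp (t * (δ - 1)) * J.toReal) := by
          rw [ENNReal.toReal_mul, ENNReal.toReal_mul, ENNReal.toReal_ofReal (by positivity)]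
          simp
      _ ≤ 2 ^ m * (2 * ((ε / 8) ^ (-δ) * M ^ (-δ)) * Real.exp (t * (δ - 1)) * J.toReal) := by
          gcongr
      _ = C₁ * Real.exp (t * (δ - 1)) * M ^ (-δ) := by rw [hC₁]; ring
      _ ≤ _ := by gcongr; linarith
  · push Not at hcase
    have hε1 : ε ≤ 1 / 4 := by
      rw [hε]; gcongr; linarith [(Nat.cast_nonneg m : (0 : ℝ) ≤ m)]
    have hr2 : |r₂| < ε * M := (le_max_left _ _).trans_lt hcase
    have hc2 : |c i| < ε * M := (le_max_right _ _).trans_lt hcase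
    have hεM : ε * M ≤ M / 4 := by nlinarith
    have hr1 : M = |r₁| := by
      rcases max_choice |r₁| (max |c i| |r₂|) with h | h
      · rw [h] at hMdef; exact hMdef
      · rw [h, max_comm] at hMdef; linarith
    -- The first coordinate of the image stays at least half of `e^t |r₁|`.
    have hlow : ∀ s ∈ closedBall (0 : EuclideanSpace ℝ (Fin (m + 1))) 1,
        1 / 2 * Real.exp t * M ≤ F s := by
      intro s hs
      rw [mem_closedBall_zero_iff] at hs
      refine le_trans ?_ (le_max_left _ _)
      rw [abs_mul, abs_of_pos (Real.exp_pos t)]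
      have e1 : |∑ j, s j * c j| ≤ M / 4 := by
        calc |∑ j, s j * c j| ≤ ∑ j, |s j * c j| := Finset.abs_sum_le_sum_abs _ _
          _ ≤ ∑ _j : Fin (m + 1), ε * M := by
              refine Finset.sum_le_sum fun j _ => ?_
              have h1 : |s j| ≤ 1 := (PiLp.norm_apply_le s j).trans hs
              rw [abs_mul]
              calc |s j| * |c j| ≤ 1 * |c j| := by gcongr
                _ ≤ ε * M := by rw [one_mul]; exact (hci j).trans hc2.le
          _ = M / 4 := by
              rw [Finset.sum_const, Finset.card_univ, Fintype.card_fin, nsmul_eq_mul, hε]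
              push_cast
              field_simp
      have e2 : |r₂ * ‖s‖ ^ 2 / 2| ≤ M / 4 := by
        have : ‖s‖ ^ 2 ≤ 1 := pow_le_one₀ (norm_nonneg _) hs
        rw [abs_div, abs_mul, abs_of_nonneg (sq_nonneg ‖s‖), abs_two]
        nlinarith [abs_nonneg r₂]
      have e3 : M / 2 ≤ |r₁ + (∑ j, s j * c j) + r₂ * ‖s‖ ^ 2 / 2| := by
        rw [abs_le] at e1 e2
        rcases abs_choice r₁ with h | h
        · exact le_trans (by linarith) (le_abs_self _)
        · exact le_trans (by linarith) (neg_le_abs _)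
      nlinarith [Real.exp_pos t]
    have hb : ∀ s ∈ closedBall (0 : EuclideanSpace ℝ (Fin (m + 1))) 1,
        ‖F s ^ (-δ)‖ ≤ (1 / 2) ^ (-δ) * Real.exp (t * (δ - 1)) * M ^ (-δ) := by
      intro s hs
      rw [Real.norm_of_nonneg (Real.rpow_nonneg (hF0 _) _)]
      calc F s ^ (-δ) ≤ (1 / 2 * Real.exp t * M) ^ (-δ) :=
            Real.rpow_le_rpow_of_nonpos (by positivity) (hlow s hs) (by linarith)
        _ = (1 / 2) ^ (-δ) * Real.exp (t * (-δ)) * M ^ (-δ) := by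
            rw [Real.mul_rpow (by positivity) hM.le, Real.mul_rpow (by positivity)
              (by positivity), ← Real.exp_mul]
        _ ≤ _ := by gcongr; linarith
    calc ∫ s in closedBall (0 : EuclideanSpace ℝ (Fin (m + 1))) 1, F s ^ (-δ)
        ≤ (1 / 2) ^ (-δ) * Real.exp (t * (δ - 1)) * M ^ (-δ) * V :=
          (Real.le_norm_self _).trans
            (norm_setIntegral_le_of_norm_le_const measure_closedBall_lt_top hb)
      _ = C₂ * Real.exp (t * (δ - 1)) * M ^ (-δ) := by rw [hC₂]; ring
      _ ≤ _ := by gcongr; linarith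

theorem maxNorm_pos {n : ℕ} (Z : PaperSpace n) (hZ : Z ≠ 0) : 0 < maxNorm Z := by
  by_contra! h
  apply hZ
  have h1 : |Z.1| ≤ 0 := (le_max_left _ _).trans h
  have h2 : (⨆ i, |Z.2.1 i|) ≤ 0 := ((le_max_left _ _).trans (le_max_right _ _)).trans h
  have h3 : |Z.2.2| ≤ 0 := ((le_max_right _ _).trans (le_max_right _ _)).trans h
  refine Prod.ext (abs_nonpos_iff.1 h1) (Prod.ext ?_ (abs_nonpos_iff.1 h3))
  ext i
  exact abs_nonpos_iff.1 ((le_ciSup (f := fun i => |Z.2.1 i|)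
    (Set.finite_range _).bddAbove i).trans h2)

/-- linear algebra lemma: on average the expanding horosphere increases
the length of vectors in `𝔯`. -/
theorem stmt9 (n : ℕ) (hn : 3 ≤ n) (δ : ℝ) (hδ : 1 / 2 < δ) (hδ1 : δ < 1) :
    ∃ C > (0 : ℝ),
      ∀ Z : PaperSpace n, Z ≠ 0 → ∀ t : ℝ, 0 < t →
        (∫ s in closedBall (0 : EuclideanSpace ℝ (Fin (n - 2))) 1,
            (maxNorm (AdAU t s Z)) ^ (-δ))
          ≤ C * Real.exp (t * (δ - 1)) * (maxNorm Z) ^ (-δ) := by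
  obtain ⟨C, hC, h⟩ := core (n - 2) (by omega) δ hδ hδ1
  exact ⟨C, hC, fun Z hZ t ht => h Z.1 Z.2.2 Z.2.1 t (maxNorm Z) ht (maxNorm_pos Z hZ) rfl⟩
end

section
/- Let 1/2 < δ < 1. There exists a constant C depending only on n and δ such that for every v ∈ ℝ^{n+1} of the form v = g·e₁ with g ∈ G, and every t > 0, ∫_{{s ∈ ℝ^{n−2} : ∥s∥ ≤ 1}} ∥a_t u_s v∥^{−δ} ds ≤ C·e^{t(δ−1)}·∥v∥^{−δ}, where the integral is with respect to Lebesgue measure on ℝ^{n−2} and a_t u_s v denotes the matrix product acting on v. -/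
/-!
Put `x = v₁`, `z = v_{n+1}`, and let `f(s)` be the first coordinate of `u_s v`. The vector
`v = g e₁` lies on the light cone `Q₀ = 0`, where the square of the Euclidean norm equals
`(x + z)²`. Since `a_t u_s` preserves the cone, `∥a_t u_s v∥ = |e^t f(s) + e^{-t} z|` and
`∥v∥ = |x + z|` (`norm_act`, `norm_eq`); moreover `2 f(s) z` is the sum of the squares of the
middle coordinates of `u_s v` (`two_mul_firstCoord`), so the two terms have the same sign.

If `8|z| ≤ |x|`, Cauchy–Schwarz gives `|f(s)| ≫ |x| ≫ ∥v∥` on the unit ball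
(`norm_act_ge_of_small`), and the integral is `≪ e^{-tδ} ∥v∥^{-δ}`, which suffices because
`-δ ≤ δ - 1`. Otherwise `|z| ≫ ∥v∥`, and keeping a single middle coordinate of `u_s v` yields
`∥a_t u_s v∥ ≫ ∥v∥ (e^t (s₁ + c)² + e^{-t})` for some `c` depending on `v`
(`norm_act_ge_of_large`). Fubini reduces to the line (`ball_integral`), and rescaling
`u = e^t (s₁ + c)` gives `e^{t(δ-1)} ∫ (1 + u²)^{-δ} du`, finite since `2δ > 1`
(`line_integral`).
-/

open MeasureTheory Metric

/-- The quadratic form `Q₀(x₁,…,x_{n+1}) = 2x₁x_{n+1} − Σ_{k=2}^{n} x_k²` on `ℝ^{n+1}`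
(indices are 0-based: `x₁ = x 0`, `x_{n+1} = x (Fin.last n)`). -/
def Q0 (n : ℕ) (x : Fin (n + 1) → ℝ) : ℝ :=
  2 * x 0 * x (Fin.last n) -
    ∑ i : Fin (n + 1), (if i ≠ 0 ∧ i ≠ Fin.last n then (x i) ^ 2 else 0)

/-- The group `G` of real `(n+1)×(n+1)` matrices of determinant `1` preserving `Q₀`. -/
def Ggrp (n : ℕ) : Set (Matrix (Fin (n + 1)) (Fin (n + 1)) ℝ) :=
  {g | g.det = 1 ∧ ∀ x : Fin (n + 1) → ℝ, Q0 n (g.mulVec x) = Q0 n x}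

/-- The Euclidean norm of a vector in `ℝ^{n+1}`. -/
noncomputable def euclNormV (n : ℕ) (v : Fin (n + 1) → ℝ) : ℝ :=
  Real.sqrt (∑ i, (v i) ^ 2)

/-- The standard basis vector with `1` in 0-based position `k`. -/
def eVec (n : ℕ) (k : ℕ) : Fin (n + 1) → ℝ := fun j => if (j : ℕ) = k then 1 else 0

/-- `a_t = diag(e^t, 1, …, 1, e^{−t})`. -/
noncomputable def amat (n : ℕ) (t : ℝ) : Matrix (Fin (n + 1)) (Fin (n + 1)) ℝ :=
  Matrix.diagonal fun i =>
    if (i : ℕ) = 0 then Real.exp t else if (i : ℕ) = n then Real.exp (-t) else 1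

/-- For `z ∈ ℝ^{n−1}`, the unipotent matrix `n(z)` with first row `(1, z, ∥z∥²/2)`,
middle block `Id_{n−1}` with last column `zᵀ`, and last row `(0,…,0,1)`. -/
noncomputable def nmat (n : ℕ) (z : Fin (n - 1) → ℝ) :
    Matrix (Fin (n + 1)) (Fin (n + 1)) ℝ := fun i j =>
  if i = j then 1
  else if (i : ℕ) = 0 then
    (if (j : ℕ) = n then (∑ k, (z k) ^ 2) / 2
     else if h : (j : ℕ) - 1 < n - 1 then z ⟨(j : ℕ) - 1, h⟩ else 0)
  else if (j : ℕ) = n then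
    (if h : (i : ℕ) - 1 < n - 1 then z ⟨(i : ℕ) - 1, h⟩ else 0)
  else 0

/-- `u_s = n(s,0)` for `s ∈ ℝ^{n−2}`, where `(s,0) ∈ ℝ^{n−1}` is `s` with a zero appended. -/
noncomputable def umat (n : ℕ) (s : EuclideanSpace ℝ (Fin (n - 2))) :
    Matrix (Fin (n + 1)) (Fin (n + 1)) ℝ :=
  nmat n (fun k => if h : (k : ℕ) < n - 2 then s ⟨(k : ℕ), h⟩ else 0)

/-! ### Coordinates -/

/-- The coordinates of `ℝ^{d+3}` split as first, `d` middle ones moved by `u_s`, the last middle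
one fixed by `u_s`, and last. -/
lemma sum_split {d : ℕ} (f : Fin (d + 2 + 1) → ℝ) :
    ∑ i, f i = f 0 + (∑ k : Fin d, f k.castSucc.castSucc.succ + f (Fin.last d).castSucc.succ)
      + f (Fin.last (d + 2)) := by
  rw [Fin.sum_univ_succ, Fin.sum_univ_castSucc, Fin.sum_univ_castSucc, Fin.succ_last]
  ring

lemma Q0_split {d : ℕ} (v : Fin (d + 2 + 1) → ℝ) :
    Q0 (d + 2) v = 2 * v 0 * v (Fin.last (d + 2)) -
      (∑ k : Fin d, v k.castSucc.castSucc.succ ^ 2 + v (Fin.last d).castSucc.succ ^ 2) := by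
  have h1 : ∀ k : Fin d, (k.castSucc.castSucc.succ : Fin (d + 2 + 1)) ≠ Fin.last (d + 2) := by
    intro k h; have := congrArg Fin.val h; simp at this; omega
  have h2 : ((Fin.last d).castSucc.succ : Fin (d + 2 + 1)) ≠ Fin.last (d + 2) := by
    intro h; have := congrArg Fin.val h; simp at this
  rw [Q0, sum_split]
  simp [h1, h2, Fin.succ_ne_zero]

section Action
variable {d : ℕ} (t : ℝ) (s : EuclideanSpace ℝ (Fin d)) (v : Fin (d + 2 + 1) → ℝ)

lemma act_first : ((amat (d + 2) t * umat (d + 2) s).mulVec v) 0 =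
    Real.exp t * (v 0 + ∑ k : Fin d, s k * v k.castSucc.castSucc.succ
      + (∑ k : Fin d, s k ^ 2) / 2 * v (Fin.last (d + 2))) := by
  have h1 : ∀ k : Fin d, (k : ℕ) ≠ d + 1 := fun k => by omega
  have h3 : ∀ k : Fin d, (k : ℕ) < d + 1 := fun k => by omega
  have hs : (∑ k : Fin (d + 2 - 1), (if h : (k : ℕ) < d then s ⟨k, h⟩ else 0) ^ 2)
      = ∑ k : Fin d, s k ^ 2 := by
    change (∑ k : Fin (d + 1), (if h : (k : ℕ) < d then s ⟨k, h⟩ else 0) ^ 2) = _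
    rw [Fin.sum_univ_castSucc]
    simp
  have hz : ∀ k : Fin d, (0 : Fin (d + 2 + 1)) ≠ k.castSucc.castSucc.succ := fun k =>
    (Fin.succ_ne_zero _).symm
  have hz1 : (0 : Fin (d + 2 + 1)) ≠ (Fin.last d).castSucc.succ := (Fin.succ_ne_zero _).symm
  have hz2 : (0 : Fin (d + 2 + 1)) ≠ Fin.last (d + 2) := by
    intro h; have := congrArg Fin.val h; simp at this
  rw [← Matrix.mulVec_mulVec, amat, Matrix.mulVec_diagonal, Matrix.mulVec, dotProduct, sum_split]
  simp [umat, nmat, h1, h3, hz, hz1, hz2]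
  left
  simpa using hs

lemma act_mid (k : Fin d) : ((amat (d + 2) t * umat (d + 2) s).mulVec v) k.castSucc.castSucc.succ =
    v k.castSucc.castSucc.succ + s k * v (Fin.last (d + 2)) := by
  have h1 : ∀ k : Fin d, (k : ℕ) ≠ d + 1 := fun k => by omega
  have h3 : ∀ k : Fin d, (k : ℕ) < d + 1 := fun k => by omega
  have h4 : k.castSucc ≠ Fin.last d := (Fin.castSucc_lt_last k).ne
  have h5 : (k.castSucc.castSucc.succ : Fin (d + 2 + 1)) ≠ Fin.last (d + 2) := by
    intro h; have := congrArg Fin.val h; simp at this; omega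
  rw [← Matrix.mulVec_mulVec, amat, Matrix.mulVec_diagonal, Matrix.mulVec, dotProduct, sum_split]
  simp [umat, nmat, h1, h3, h4, h5, Fin.succ_ne_zero]

lemma act_mid_last : ((amat (d + 2) t * umat (d + 2) s).mulVec v) (Fin.last d).castSucc.succ =
    v (Fin.last d).castSucc.succ := by
  have h1 : ∀ k : Fin d, (k : ℕ) ≠ d + 1 := fun k => by omega
  have h4 : ∀ k : Fin d, Fin.last d ≠ k.castSucc := fun k => (Fin.castSucc_lt_last k).ne'
  have h5 : ((Fin.last d).castSucc.succ : Fin (d + 2 + 1)) ≠ Fin.last (d + 2) := by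
    intro h; have := congrArg Fin.val h; simp at this
  rw [← Matrix.mulVec_mulVec, amat, Matrix.mulVec_diagonal, Matrix.mulVec, dotProduct, sum_split]
  simp [umat, nmat, h1, h4, h5, Fin.succ_ne_zero]

lemma act_last : ((amat (d + 2) t * umat (d + 2) s).mulVec v) (Fin.last (d + 2)) =
    Real.exp (-t) * v (Fin.last (d + 2)) := by
  have h1 : ∀ k : Fin d, (k : ℕ) ≠ d + 1 := fun k => by omega
  have h5 : ∀ k : Fin d, Fin.last (d + 2) ≠ (k.castSucc.castSucc.succ : Fin (d + 2 + 1)) := by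
    intro k h; have := congrArg Fin.val h; simp at this; omega
  have h6 : Fin.last (d + 2) ≠ ((Fin.last d).castSucc.succ : Fin (d + 2 + 1)) := by
    intro h; have := congrArg Fin.val h; simp at this
  rw [← Matrix.mulVec_mulVec, amat, Matrix.mulVec_diagonal, Matrix.mulVec, dotProduct, sum_split]
  simp [umat, nmat, h1, h5, h6]

end Action

/-! ### Norms on the light cone -/

section Norm
variable {d : ℕ} {t : ℝ} {s : EuclideanSpace ℝ (Fin d)} {v : Fin (d + 2 + 1) → ℝ}

/-- The first coordinate of `u_s v`, written out as a quadratic polynomial in `s`. -/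
noncomputable def firstCoord {d : ℕ} (s : EuclideanSpace ℝ (Fin d)) (v : Fin (d + 2 + 1) → ℝ) : ℝ :=
  v 0 + ∑ k : Fin d, s k * v k.castSucc.castSucc.succ
      + (∑ k : Fin d, s k ^ 2) / 2 * v (Fin.last (d + 2))

/-- The equation `Q₀(u_s v) = 0`. -/
lemma two_mul_firstCoord (hv : Q0 (d + 2) v = 0) :
    2 * firstCoord s v * v (Fin.last (d + 2)) =
      ∑ k : Fin d, (v k.castSucc.castSucc.succ + s k * v (Fin.last (d + 2))) ^ 2
        + v (Fin.last d).castSucc.succ ^ 2 := by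
  rw [Q0_split] at hv
  have h : ∑ k : Fin d, (v k.castSucc.castSucc.succ + s k * v (Fin.last (d + 2))) ^ 2
      = ∑ k : Fin d, v k.castSucc.castSucc.succ ^ 2
        + 2 * v (Fin.last (d + 2)) * ∑ k : Fin d, s k * v k.castSucc.castSucc.succ
        + v (Fin.last (d + 2)) ^ 2 * ∑ k : Fin d, s k ^ 2 := by
    rw [Finset.mul_sum, Finset.mul_sum, ← Finset.sum_add_distrib, ← Finset.sum_add_distrib]
    exact Finset.sum_congr rfl fun k _ => by ring
  rw [h, firstCoord]
  linear_combination hv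

/-- On the light cone `∑ (middle)² = 2 x₁ x_{n+1}`, so the Euclidean norm is `|x₁ + x_{n+1}|`. -/
lemma norm_eq (hv : Q0 (d + 2) v = 0) :
    euclNormV (d + 2) v = |v 0 + v (Fin.last (d + 2))| := by
  rw [Q0_split] at hv
  rw [euclNormV, sum_split, ← Real.sqrt_sq_eq_abs]
  congr 1
  linear_combination -hv

lemma norm_act (hv : Q0 (d + 2) v = 0) :
    euclNormV (d + 2) ((amat (d + 2) t * umat (d + 2) s).mulVec v) =
      |Real.exp t * firstCoord s v + Real.exp (-t) * v (Fin.last (d + 2))| := by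
  rw [norm_eq, act_first, act_last, firstCoord]
  have h := two_mul_firstCoord (s := s) hv
  have he : Real.exp t * Real.exp (-t) = 1 := by rw [← Real.exp_add]; simp
  rw [Q0_split, act_first, act_last, act_mid_last]
  simp only [act_mid]
  rw [firstCoord] at h
  linear_combination h + 2 * (v 0 + ∑ k : Fin d, s k * v k.castSucc.castSucc.succ
      + (∑ k : Fin d, s k ^ 2) / 2 * v (Fin.last (d + 2))) * v (Fin.last (d + 2)) * he

/-- If `|x_{n+1}|` is small compared with `|x₁|`, then `|x₁|` dominates the first coordinate of
`u_s v` for all `∥s∥ ≤ 1`, and `a_t` expands it by `e^t`. -/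
lemma norm_act_ge_of_small (hv : Q0 (d + 2) v = 0) (hs : ‖s‖ ≤ 1)
    (h8 : 8 * |v (Fin.last (d + 2))| ≤ |v 0|) :
    Real.exp t * (euclNormV (d + 2) v / 18) ≤
      euclNormV (d + 2) ((amat (d + 2) t * umat (d + 2) s).mulVec v) := by
  have hfz := two_mul_firstCoord (s := s) hv
  rw [norm_act hv, norm_eq hv]
  set x := v 0 with hx
  set z := v (Fin.last (d + 2)) with hz
  set y : Fin d → ℝ := fun k => v k.castSucc.castSucc.succ with hy
  have hfz0 : 0 ≤ firstCoord s v * z := by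
    have : 0 ≤ ∑ k : Fin d, (y k + s k * z) ^ 2 := Finset.sum_nonneg fun _ _ => sq_nonneg _
    nlinarith [sq_nonneg (v (Fin.last d).castSucc.succ)]
  have hs2 : ∑ k : Fin d, s k ^ 2 ≤ 1 := by
    rw [← EuclideanSpace.real_norm_sq_eq]
    nlinarith [norm_nonneg s]
  have hs0 : 0 ≤ ∑ k : Fin d, s k ^ 2 := Finset.sum_nonneg fun _ _ => sq_nonneg _
  have hy0 : 0 ≤ ∑ k : Fin d, y k ^ 2 := Finset.sum_nonneg fun _ _ => sq_nonneg _
  have hcs : (∑ k : Fin d, s k * y k) ^ 2 ≤ (∑ k : Fin d, s k ^ 2) * ∑ k : Fin d, y k ^ 2 :=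
    Finset.sum_mul_sq_le_sq_mul_sq _ _ _
  have hq : ∑ k : Fin d, y k ^ 2 ≤ 2 * (|x| * |z|) := by
    rw [Q0_split] at hv
    have h1 : x * z ≤ |x| * |z| := by rw [← abs_mul]; exact le_abs_self _
    have h2 := sq_nonneg (v (Fin.last d).castSucc.succ)
    change 2 * x * z - (∑ k : Fin d, y k ^ 2 + _) = 0 at hv
    linarith
  have hsy : |∑ k : Fin d, s k * y k| ≤ |x| / 2 := by
    refine abs_le_of_sq_le_sq ?_ (by positivity)
    nlinarith [abs_nonneg x, abs_nonneg z]
  have hf : firstCoord s v = x + ∑ k : Fin d, s k * y k + (∑ k : Fin d, s k ^ 2) / 2 * z := rfl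
  have hsz : |(∑ k : Fin d, s k ^ 2) / 2 * z| ≤ |z| / 2 := by
    rw [abs_mul, abs_of_nonneg (by positivity)]
    nlinarith [abs_nonneg z]
  have hfx : 7 / 16 * |x| ≤ |firstCoord s v| := by
    have h1 : |x| ≤ |firstCoord s v| + |∑ k : Fin d, s k * y k|
        + |(∑ k : Fin d, s k ^ 2) / 2 * z| := by
      have : x = firstCoord s v - ∑ k : Fin d, s k * y k - (∑ k : Fin d, s k ^ 2) / 2 * z := by
        rw [hf]; ring
      calc |x| = |firstCoord s v - ∑ k : Fin d, s k * y k - (∑ k : Fin d, s k ^ 2) / 2 * z| := by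
            rw [← this]
        _ ≤ _ := (abs_sub _ _).trans (by gcongr; exact abs_sub _ _)
    linarith
  have hM : |x + z| / 18 ≤ |firstCoord s v| := by
    have := abs_add_le x z
    linarith [abs_nonneg x]
  calc Real.exp t * (|x + z| / 18) ≤ Real.exp t * |firstCoord s v| := by gcongr
    _ = |Real.exp t * firstCoord s v| := by rw [abs_mul, Real.abs_exp]
    _ ≤ _ := by
      apply sq_le_sq.mp
      have : 0 ≤ Real.exp t * Real.exp (-t) * (firstCoord s v * z) := by positivity
      nlinarith [sq_nonneg (Real.exp (-t) * z)]

/-- If `|x_{n+1}|` is comparable to `∥v∥`, the norm is bounded below by a quadratic polynomial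
in any one chosen coordinate of `s`. -/
lemma norm_act_ge_of_large (hv : Q0 (d + 2) v = 0) (j : Fin d)
    (h8 : |v 0| < 8 * |v (Fin.last (d + 2))|) :
    euclNormV (d + 2) v / 18 * (Real.exp t *
        (s j + v j.castSucc.castSucc.succ / v (Fin.last (d + 2))) ^ 2 + Real.exp (-t)) ≤
      euclNormV (d + 2) ((amat (d + 2) t * umat (d + 2) s).mulVec v) := by
  have hfz := two_mul_firstCoord (s := s) hv
  rw [norm_act hv, norm_eq hv]
  set x := v 0 with hx
  set z := v (Fin.last (d + 2)) with hz
  set y : Fin d → ℝ := fun k => v k.castSucc.castSucc.succ with hy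
  have hz0 : 0 < |z| := by linarith [abs_nonneg x]
  have hzne : z ≠ 0 := abs_pos.mp hz0
  have hj : (y j + s j * z) ^ 2 ≤ 2 * (firstCoord s v * z) := by
    have h1 : (y j + s j * z) ^ 2 ≤ ∑ k : Fin d, (y k + s k * z) ^ 2 :=
      Finset.single_le_sum (f := fun k => (y k + s k * z) ^ 2)
        (fun _ _ => sq_nonneg _) (Finset.mem_univ j)
    nlinarith [sq_nonneg (v (Fin.last d).castSucc.succ)]
  have hj' : (y j + s j * z) ^ 2 = |z| ^ 2 * (s j + y j / z) ^ 2 := by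
    rw [sq_abs]; field_simp; ring
  have hM : |x + z| / 18 ≤ |z| / 2 := by
    have := abs_add_le x z
    linarith
  have hmain : |z| * (|z| / 2 * (Real.exp t * (s j + y j / z) ^ 2 + Real.exp (-t))) ≤
      |z| * |Real.exp t * firstCoord s v + Real.exp (-t) * z| := by
    rw [← abs_mul]
    refine le_trans ?_ (le_abs_self _)
    have h1 := mul_le_mul_of_nonneg_left (hj' ▸ hj) (Real.exp_pos t).le
    have h2 : 0 ≤ Real.exp (-t) * z ^ 2 := by positivity
    have h3 := sq_abs z
    rw [h3] at h1
    have : |z| * (|z| / 2 * (Real.exp t * (s j + y j / z) ^ 2 + Real.exp (-t)))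
      = z ^ 2 / 2 * (Real.exp t * (s j + y j / z) ^ 2 + Real.exp (-t)) := by rw [← h3]; ring
    rw [this]
    nlinarith
  calc _ ≤ |z| / 2 * (Real.exp t * (s j + y j / z) ^ 2 + Real.exp (-t)) := by
        gcongr
    _ ≤ _ := le_of_mul_le_mul_left hmain hz0

end Norm

/-! ### Integrals over the line and the ball -/

/-- The substitution `u = e^t (σ + c)` turns the integral over the line into a fixed convergent
one; this is where `2δ > 1` is used. -/
lemma line_integral {δ : ℝ} (hδ : 1 / 2 < δ) (t c : ℝ) :
    Integrable (fun σ : ℝ => (Real.exp t * (σ + c) ^ 2 + Real.exp (-t)) ^ (-δ)) ∧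
    ∫ σ : ℝ, (Real.exp t * (σ + c) ^ 2 + Real.exp (-t)) ^ (-δ) =
      (∫ u : ℝ, (1 + u ^ 2) ^ (-δ)) * Real.exp (t * (δ - 1)) := by
  have hφ : Integrable (fun u : ℝ => (1 + u ^ 2) ^ (-δ)) := by
    have := integrable_rpow_neg_one_add_norm_sq (E := ℝ) (μ := volume) (r := 2 * δ)
      (by simp; linarith)
    convert this using 3 with u
    · simp
    · ring
  have hψ : (fun σ : ℝ => (Real.exp t * (σ + c) ^ 2 + Real.exp (-t)) ^ (-δ)) =
      fun σ => Real.exp (t * δ) * (1 + (Real.exp t * (σ + c)) ^ 2) ^ (-δ) := by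
    funext σ
    have : Real.exp t * (σ + c) ^ 2 + Real.exp (-t)
        = Real.exp (-t) * (1 + (Real.exp t * (σ + c)) ^ 2) := by
      have he : Real.exp t * Real.exp (-t) = 1 := by rw [← Real.exp_add]; simp
      linear_combination -(Real.exp t * (σ + c) ^ 2) * he
    rw [this, Real.mul_rpow (Real.exp_pos _).le (by positivity), ← Real.exp_mul]
    congr 2
    ring
  rw [hψ]
  constructor
  · exact ((hφ.comp_mul_left' (Real.exp_pos t).ne').comp_add_right c).const_mul _
  · rw [integral_const_mul,
      integral_add_right_eq_self (fun σ => (1 + (Real.exp t * σ) ^ 2) ^ (-δ)) c,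
      Measure.integral_comp_mul_left (fun u => (1 + u ^ 2) ^ (-δ)) (Real.exp t),
      abs_of_pos (by positivity), smul_eq_mul, ← Real.exp_neg, ← mul_assoc, ← Real.exp_add,
      mul_comm]
    congr 2
    ring

/-- The unit ball lies in the cube `[-1, 1]^{m+1}`; Fubini on `ℝ × [-1, 1]^m` reduces the
integral over the ball to an integral in the first coordinate. -/
lemma ball_integral {m : ℕ} {ψ : ℝ → ℝ} (hψ : Integrable ψ) (hψ0 : ∀ σ, 0 ≤ ψ σ) :
    IntegrableOn (fun s : EuclideanSpace ℝ (Fin (m + 1)) => ψ (s 0)) (closedBall 0 1) ∧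
    ∫ s in closedBall (0 : EuclideanSpace ℝ (Fin (m + 1))) 1, ψ (s 0) ≤ 2 ^ m * ∫ σ, ψ σ := by
  let χ : ℝ → ℝ := (Set.Icc (-1 : ℝ) 1).indicator fun _ => 1
  have hχ : Integrable χ := by
    refine (integrable_indicator_iff measurableSet_Icc).mpr ?_
    exact integrableOn_const (by simp)
  have hχi : ∫ σ, χ σ = 2 := by
    rw [integral_indicator measurableSet_Icc]
    simp
    norm_num
  have hχ0 : ∀ σ, 0 ≤ χ σ := fun σ => Set.indicator_nonneg (fun _ _ => zero_le_one) σ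
  let h : Fin (m + 1) → ℝ → ℝ := Fin.cons ψ fun _ => χ
  have hh : ∀ i, Integrable (h i) := Fin.cases hψ fun _ => hχ
  have hh0 : ∀ i σ, 0 ≤ h i σ := Fin.cases hψ0 fun _ => hχ0
  let F : (Fin (m + 1) → ℝ) → ℝ := fun s => ∏ i, h i (s i)
  have hF : Integrable F := Integrable.fintype_prod hh
  have hFi : ∫ s, F s = 2 ^ m * ∫ σ, ψ σ := by
    change ∫ s : Fin (m + 1) → ℝ, ∏ i, h i (s i) = _
    rw [integral_fintype_prod_volume_eq_prod, Fin.prod_univ_succ]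
    simp [h, hχi, mul_comm]
  have hmp := EuclideanSpace.volume_preserving_symm_measurableEquiv_toLp (Fin (m + 1))
  have hF' : Integrable fun s : EuclideanSpace ℝ (Fin (m + 1)) => F s.ofLp :=
    hmp.integrable_comp_of_integrable hF
  have hFi' : ∫ s : EuclideanSpace ℝ (Fin (m + 1)), F s.ofLp = 2 ^ m * ∫ σ, ψ σ := by
    rw [← hFi]
    exact hmp.integral_comp' F
  have heq : Set.EqOn (fun s : EuclideanSpace ℝ (Fin (m + 1)) => F s.ofLp)
      (fun s => ψ (s 0)) (closedBall 0 1) := by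
    intro s hs
    have hs1 : ‖s‖ ≤ 1 := by simpa using hs
    have hk : ∀ k : Fin m, χ (s k.succ) = 1 := fun k => by
      have h1 : ‖s k.succ‖ ≤ ‖s‖ := PiLp.norm_apply_le s k.succ
      exact Set.indicator_of_mem (Set.mem_Icc.mpr (abs_le.mp (h1.trans hs1))) fun _ : ℝ => (1 : ℝ)
    simp [F, h, Fin.prod_univ_succ, hk]
  refine ⟨hF'.integrableOn.congr_fun heq measurableSet_closedBall, ?_⟩
  rw [← setIntegral_congr_fun measurableSet_closedBall heq, ← hFi']
  exact setIntegral_le_integral hF'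
    (Filter.Eventually.of_forall fun s => Finset.prod_nonneg fun i _ => hh0 i _)

/-! ### The orbit of `e₁` -/

lemma Q0_orbit {d : ℕ} {g : Matrix (Fin (d + 2 + 1)) (Fin (d + 2 + 1)) ℝ}
    (hg : g ∈ Ggrp (d + 2)) : Q0 (d + 2) (g.mulVec (eVec (d + 2) 0)) = 0 := by
  rw [hg.2, Q0_split]
  simp [eVec]

lemma orbit_norm_pos {d : ℕ} {g : Matrix (Fin (d + 2 + 1)) (Fin (d + 2 + 1)) ℝ}
    (hg : g ∈ Ggrp (d + 2)) : 0 < euclNormV (d + 2) (g.mulVec (eVec (d + 2) 0)) := by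
  have hne : g.mulVec (eVec (d + 2) 0) ≠ 0 := by
    intro h
    have hdet : g.det ≠ 0 := by rw [hg.1]; exact one_ne_zero
    have h0 := Matrix.eq_zero_of_mulVec_eq_zero hdet h
    have := congrFun h0 0
    simp [eVec] at this
  obtain ⟨i, hi⟩ := Function.ne_iff.mp hne
  have hi' : g.mulVec (eVec (d + 2) 0) i ≠ 0 := hi
  exact Real.sqrt_pos.mpr (Finset.sum_pos' (fun _ _ => sq_nonneg _)
    ⟨i, Finset.mem_univ _, by positivity⟩)

/-! ### The estimate -/

/-- linear algebra lemma for vectors in `G·e₁`. -/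
theorem stmt11 (n : ℕ) (hn : 3 ≤ n) (δ : ℝ) (hδ : 1 / 2 < δ) (hδ1 : δ < 1) :
    ∃ C > (0 : ℝ),
      ∀ g ∈ Ggrp n, ∀ t : ℝ, 0 < t →
        (∫ s in closedBall (0 : EuclideanSpace ℝ (Fin (n - 2))) 1,
            (euclNormV n ((amat n t * umat n s).mulVec (g.mulVec (eVec n 0)))) ^ (-δ))
          ≤ C * Real.exp (t * (δ - 1)) * (euclNormV n (g.mulVec (eVec n 0))) ^ (-δ) := by
  obtain ⟨m, rfl⟩ : ∃ m, n = m + 1 + 2 := ⟨n - 3, by omega⟩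
  -- `m + 1 + 2 - 2` reduces to `m + 1`, the form in which the lemmas above are stated.
  change ∃ C > (0 : ℝ),
      ∀ g ∈ Ggrp (m + 1 + 2), ∀ t : ℝ, 0 < t →
        (∫ s in closedBall (0 : EuclideanSpace ℝ (Fin (m + 1))) 1,
            (euclNormV (m + 1 + 2) ((amat (m + 1 + 2) t * umat (m + 1 + 2) s).mulVec
              (g.mulVec (eVec (m + 1 + 2) 0)))) ^ (-δ))
          ≤ C * Real.exp (t * (δ - 1)) *
            (euclNormV (m + 1 + 2) (g.mulVec (eVec (m + 1 + 2) 0))) ^ (-δ)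
  set B := closedBall (0 : EuclideanSpace ℝ (Fin (m + 1))) 1 with hB
  set I : ℝ := ∫ u : ℝ, (1 + u ^ 2) ^ (-δ) with hI
  have hI0 : 0 ≤ I := integral_nonneg fun u => by positivity
  set V : ℝ := volume.real B with hV
  have hV0 : 0 ≤ V := measureReal_nonneg
  have hk : (0 : ℝ) < 18 ^ δ := by positivity
  refine ⟨18 ^ δ * (V + 2 ^ m * I + 1), by positivity, fun g hg t ht => ?_⟩
  have hv := Q0_orbit hg
  have hM := orbit_norm_pos hg
  set v := g.mulVec (eVec (m + 1 + 2) 0) with hvdef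
  set M := euclNormV (m + 1 + 2) v with hMdef
  have h18 : (M / 18) ^ (-δ) = 18 ^ δ * M ^ (-δ) := by
    rw [Real.div_rpow hM.le (by norm_num), Real.rpow_neg (by norm_num : (0 : ℝ) ≤ 18), div_inv_eq_mul,
      mul_comm]
  have hMδ : 0 < M ^ (-δ) := by positivity
  have hE := Real.exp_pos (t * (δ - 1))
  have hnn : ∀ s : EuclideanSpace ℝ (Fin (m + 1)), 0 ≤ euclNormV (m + 1 + 2)
      ((amat (m + 1 + 2) t * umat (m + 1 + 2) s).mulVec v) ^ (-δ) := fun s =>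
    Real.rpow_nonneg (Real.sqrt_nonneg _) _
  rcases le_or_gt (8 * |v (Fin.last (m + 1 + 2))|) |v 0| with h8 | h8
  · calc _ ≤ ∫ s in B, (Real.exp t * (M / 18)) ^ (-δ) := by
          refine integral_mono_of_nonneg (Filter.Eventually.of_forall hnn)
            (integrableOn_const (measure_closedBall_lt_top.ne)) ?_
          refine (ae_restrict_iff' measurableSet_closedBall).mpr
            (Filter.Eventually.of_forall fun s hs => ?_)
          exact Real.rpow_le_rpow_of_nonpos (by positivity)
            (norm_act_ge_of_small hv (by simpa using hs) h8) (by linarith)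
      _ = V * (Real.exp (t * -δ) * (18 ^ δ * M ^ (-δ))) := by
          rw [setIntegral_const, smul_eq_mul, Real.mul_rpow (Real.exp_pos t).le (by positivity),
            ← Real.exp_mul, h18]
      _ ≤ V * (Real.exp (t * (δ - 1)) * (18 ^ δ * M ^ (-δ))) := by
          gcongr
          linarith
      _ = 18 ^ δ * V * Real.exp (t * (δ - 1)) * M ^ (-δ) := by ring
      _ ≤ _ := by
          gcongr
          linarith [show 0 ≤ 2 ^ m * I by positivity]
  · set c := v (Fin.castSucc (Fin.castSucc (0 : Fin (m + 1)))).succ / v (Fin.last (m + 1 + 2))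
    obtain ⟨hψ, hψi⟩ := line_integral hδ t c
    obtain ⟨hb, hbi⟩ := ball_integral (m := m) hψ fun σ => by positivity
    calc _ ≤ ∫ s in B, (18 ^ δ * M ^ (-δ)) *
            (Real.exp t * (s 0 + c) ^ 2 + Real.exp (-t)) ^ (-δ) := by
          refine integral_mono_of_nonneg (Filter.Eventually.of_forall hnn)
            (hb.const_mul _) (Filter.Eventually.of_forall fun s => ?_)
          change _ ≤ (18 ^ δ * M ^ (-δ)) *
            (Real.exp t * (s 0 + c) ^ 2 + Real.exp (-t)) ^ (-δ)
          rw [← h18, ← Real.mul_rpow (by positivity) (by positivity)]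
          exact Real.rpow_le_rpow_of_nonpos (by positivity)
            (norm_act_ge_of_large hv 0 h8) (by linarith)
      _ ≤ (18 ^ δ * M ^ (-δ)) * (2 ^ m * (I * Real.exp (t * (δ - 1)))) := by
          rw [integral_const_mul, ← hψi]
          gcongr
      _ = 18 ^ δ * (2 ^ m * I) * Real.exp (t * (δ - 1)) * M ^ (-δ) := by ring
      _ ≤ _ := by
          gcongr
          linarith
end
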